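/- arXiv:1508.00777 — 4 statements merged into one kernel-verified Lean document; each statement's English description precedes it below -/
import Mathlib

section
/- Let V be a finite set with |V| = n and let F be a set of edges (2-element subsets of V). Then there is a set of edges F₀ such that δF₀ = δF and |F₀| ≤ 3·|δF|. -/
/-- The set of edges (2-element subsets) of a finite vertex set `V`. -/
def edgesOn (V : Type*) [Fintype V] [DecidableEq V] : Finset (Finset V) :=
  Finset.univ.powersetCard 2

/-- The set of triangles (3-element subsets) of a finite vertex set `V`. -/
def trianglesOn (V : Type*) [Fintype V] [DecidableEq V] : Finset (Finset V) :=
  Finset.univ.powersetCard 3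

/-- Coboundary of a set of edges: the triangles containing an odd number of
edges of `F`. -/
def cobE {V : Type*} [Fintype V] [DecidableEq V] (F : Finset (Finset V)) :
    Finset (Finset V) :=
  (trianglesOn V).filter (fun t => Odd ((F.filter (· ⊆ t)).card))

/-!
Taking the link of a vertex `v` (`Finset.memberSubfamily v`) is a cone operator: if a
`(k+1)`-uniform family `T` is a cocycle modulo 2, then the link of `v` in `T` has coboundary `T`.
For `v ∉ t` this is because the sets of `T` inside `t ∪ {v}` are even in number, and all of them
except possibly `t` itself contain `v`.
Applied to `T = δF`, every vertex yields a family with coboundary `δF`. Each `t ∈ T` contributes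
to the links of its `k + 1` vertices, so the links have `(k+1) |T|` sets in total, and some vertex
has a link of at most average size.
-/

open Finset

section Counting

variable {V : Type*} [DecidableEq V]

theorem sum_card_memberSubfamily [Fintype V] (T : Finset (Finset V)) :
    ∑ v, #(T.memberSubfamily v) = ∑ t ∈ T, #t := by
  have card_link (v : V) : #(T.memberSubfamily v) = #{t ∈ T | v ∈ t} :=
    card_image_of_injOn ((erase_injOn' v).mono (by simp))
  simp only [card_link, card_filter]
  rw [sum_comm]
  simp

theorem exists_card_mul_card_memberSubfamily_le [Fintype V] [Nonempty V] {T : Finset (Finset V)}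
    {m : ℕ} (hT : (T : Set (Finset V)).Sized m) :
    ∃ v, Fintype.card V * #(T.memberSubfamily v) ≤ m * #T := by
  have sum_le : ∑ v, Fintype.card V * #(T.memberSubfamily v) ≤ ∑ _v : V, m * #T := by
    rw [← mul_sum, sum_card_memberSubfamily, sum_const_nat hT, sum_const, card_univ, smul_eq_mul,
      mul_comm m]
  obtain ⟨v, -, hv⟩ := exists_le_of_sum_le univ_nonempty sum_le
  exact ⟨v, hv⟩

theorem sized_memberSubfamily {T : Finset (Finset V)} {k : ℕ}
    (hT : (T : Set (Finset V)).Sized (k + 1)) (v : V) :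
    (T.memberSubfamily v : Set (Finset V)).Sized k := by
  intro e he
  obtain ⟨hve, hv⟩ := mem_memberSubfamily.1 he
  have card_insert_v : #(insert v e) = k + 1 := hT hve
  rwa [card_insert_of_notMem hv, Nat.add_right_cancel_iff] at card_insert_v

theorem card_filter_superset_powersetCard_succ {e s : Finset V} (hes : e ⊆ s) :
    #{t ∈ s.powersetCard (#e + 1) | e ⊆ t} = #s - #e := by
  have eq_image : {t ∈ s.powersetCard (#e + 1) | e ⊆ t} = (s \ e).image (insert · e) := by
    ext t
    simp only [mem_filter, mem_powersetCard, mem_image, mem_sdiff]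
    constructor
    · rintro ⟨⟨hts, ht⟩, het⟩
      obtain ⟨a, ha, rfl⟩ := exists_eq_insert_iff.2 ⟨het, ht.symm⟩
      exact ⟨a, ⟨hts (mem_insert_self a e), ha⟩, rfl⟩
    · rintro ⟨a, ⟨has, hae⟩, rfl⟩
      exact ⟨⟨insert_subset has hes, card_insert_of_notMem hae⟩, subset_insert a e⟩
  have inj : Set.InjOn (insert · e) (s \ e : Finset V) :=
    (insert_inj_on e).mono fun _ ha => (mem_sdiff.1 ha).2
  rw [eq_image, card_image_of_injOn inj, card_sdiff_of_subset hes]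

theorem odd_card_filter_subset_iff_mem {T : Finset (Finset V)} {t : Finset V}
    (hT : (T : Set (Finset V)).Sized #t) : Odd #{u ∈ T | u ⊆ t} ↔ t ∈ T := by
  have subset_iff_eq : ∀ u ∈ T, u ⊆ t ↔ u = t := fun u hu =>
    ⟨fun hut => eq_of_subset_of_card_le hut (hT hu).ge, Eq.subset⟩
  rw [filter_congr subset_iff_eq, filter_eq']
  split_ifs with ht <;> simp [ht]

theorem nonMemberSubfamily_filter_subset_of_mem {T : Finset (Finset V)} {v : V} {t : Finset V}
    (hT : (T : Set (Finset V)).Sized #t) (hv : v ∈ t) :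
    nonMemberSubfamily v {u ∈ T | u ⊆ t} = ∅ := by
  refine filter_eq_empty_iff.2 fun u hu => not_not.2 ?_
  obtain ⟨huT, hut⟩ := mem_filter.1 hu
  rwa [eq_of_subset_of_card_le hut (hT huT).ge]

theorem nonMemberSubfamily_filter_subset_insert (T : Finset (Finset V)) {v : V} {t : Finset V}
    (hv : v ∉ t) :
    nonMemberSubfamily v {u ∈ T | u ⊆ insert v t} = {u ∈ T | u ⊆ t} := by
  ext u
  simp only [mem_nonMemberSubfamily, mem_filter, and_assoc]
  exact and_congr_right fun _ =>
    ⟨fun h => (subset_insert_iff_of_notMem h.2).1 h.1,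
      fun hut => ⟨hut.trans (subset_insert v t), fun hvu => hv (hut hvu)⟩⟩

theorem filter_subset_memberSubfamily (T : Finset (Finset V)) (v : V) (t : Finset V) :
    {e ∈ T.memberSubfamily v | e ⊆ t} = memberSubfamily v {u ∈ T | u ⊆ insert v t} := by
  ext e
  simp only [mem_filter, mem_memberSubfamily, and_right_comm]
  exact and_congr_left fun hv => and_congr_right fun _ => (insert_subset_insert_iff hv).symm

end Counting

section Coboundary

variable {V : Type*} [Fintype V] [DecidableEq V] {k : ℕ}

/-- The coboundary modulo 2 in the complete complex on `V`: a set `F` of `k`-element subsets stands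
for a cochain with coefficients in `ℤ/2`. The index `k` is the size of the faces, one more than
their dimension. -/
def coboundary (k : ℕ) (F : Finset (Finset V)) : Finset (Finset V) :=
  {t ∈ univ.powersetCard (k + 1) | Odd #{e ∈ F | e ⊆ t}}

theorem mem_coboundary {F : Finset (Finset V)} {t : Finset V} :
    t ∈ coboundary k F ↔ #t = k + 1 ∧ Odd #{e ∈ F | e ⊆ t} := by
  simp [coboundary]

theorem sized_coboundary (k : ℕ) (F : Finset (Finset V)) :
    (coboundary k F : Set (Finset V)).Sized (k + 1) :=
  fun _ ht => (mem_coboundary.1 ht).1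

theorem even_card_filter_subset_of_coboundary_eq_empty {F : Finset (Finset V)} {t : Finset V}
    (hδF : coboundary k F = ∅) (ht : #t = k + 1) : Even #{e ∈ F | e ⊆ t} := by
  by_contra h_odd
  have ht_mem : t ∈ coboundary k F := mem_coboundary.2 ⟨ht, Nat.not_even_iff_odd.1 h_odd⟩
  exact notMem_empty t (hδF ▸ ht_mem)

theorem coboundary_coboundary {F : Finset (Finset V)} (hF : (F : Set (Finset V)).Sized k) :
    coboundary (k + 1) (coboundary k F) = ∅ := by
  refine eq_empty_of_forall_notMem fun s hs => ?_
  obtain ⟨hs_card, hs_odd⟩ := mem_coboundary.1 hs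
  have facets_eq : {t ∈ coboundary k F | t ⊆ s} =
      {t ∈ s.powersetCard (k + 1) | Odd #{e ∈ F | e ⊆ t}} := by
    ext t
    simp only [mem_filter, mem_coboundary, mem_powersetCard]
    tauto
  have double_count : ∑ t ∈ s.powersetCard (k + 1), #{e ∈ F | e ⊆ t} =
      ∑ e ∈ F, #{t ∈ s.powersetCard (k + 1) | e ⊆ t} := by
    simp only [card_filter]
    exact sum_comm
  have even_cofaces : ∀ e ∈ F, Even #{t ∈ s.powersetCard (k + 1) | e ⊆ t} := by
    intro e he
    obtain rfl := hF he
    by_cases hes : e ⊆ s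
    · have two_cofaces : #{t ∈ s.powersetCard (#e + 1) | e ⊆ t} = 2 := by
        rw [card_filter_superset_powersetCard_succ hes]
        omega
      exact two_cofaces ▸ even_two
    · rw [filter_false_of_mem fun t ht het => hes (het.trans (mem_powersetCard.1 ht).1)]
      exact Even.zero
  rw [facets_eq, ← odd_sum_iff_odd_card_odd, double_count, ← Nat.not_even_iff_odd] at hs_odd
  exact hs_odd (even_sum _ even_cofaces)

theorem coboundary_memberSubfamily {T : Finset (Finset V)}
    (hT : (T : Set (Finset V)).Sized (k + 1)) (hδT : coboundary (k + 1) T = ∅) (v : V) :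
    coboundary k (T.memberSubfamily v) = T := by
  ext t
  rw [mem_coboundary, filter_subset_memberSubfamily]
  refine (and_congr_right fun ht => ?_).trans (and_iff_right_of_imp fun h => hT h)
  have hT' : (T : Set (Finset V)).Sized #t := ht ▸ hT
  rw [← odd_card_filter_subset_iff_mem hT']
  have card_split := card_memberSubfamily_add_card_nonMemberSubfamily v {u ∈ T | u ⊆ insert v t}
  by_cases hv : v ∈ t
  · rw [insert_eq_of_mem hv, nonMemberSubfamily_filter_subset_of_mem hT' hv, card_empty,
      add_zero] at card_split
    rw [insert_eq_of_mem hv, card_split]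
  · have even_total : Even #{u ∈ T | u ⊆ insert v t} :=
      even_card_filter_subset_of_coboundary_eq_empty hδT (by rw [card_insert_of_notMem hv, ht])
    rwa [← card_split, nonMemberSubfamily_filter_subset_insert T hv, Nat.even_add'] at even_total

theorem stmt_4_general {F : Finset (Finset V)} (hF : (F : Set (Finset V)).Sized k) :
    ∃ F₀ : Finset (Finset V), (F₀ : Set (Finset V)).Sized k ∧ coboundary k F₀ = coboundary k F ∧
      Fintype.card V * #F₀ ≤ (k + 1) * #(coboundary k F) := by
  cases isEmpty_or_nonempty V
  · exact ⟨F, hF, rfl, by simp⟩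
  · have hT := sized_coboundary k F
    obtain ⟨v, hv⟩ := exists_card_mul_card_memberSubfamily_le hT
    exact ⟨(coboundary k F).memberSubfamily v, sized_memberSubfamily hT v,
      coboundary_memberSubfamily hT (coboundary_coboundary hF) v, hv⟩

end Coboundary

theorem stmt_4 {V : Type*} [Fintype V] [DecidableEq V]
    (F : Finset (Finset V)) (hF : F ⊆ edgesOn V) :
    ∃ F₀ : Finset (Finset V), F₀ ⊆ edgesOn V ∧ cobE F₀ = cobE F ∧
      F₀.card ≤ 3 * (cobE F).card := by
  obtain ⟨F₀, hF₀, hδ, hcard⟩ := stmt_4_general (subset_powersetCard_univ_iff.1 hF)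
  refine ⟨F₀, subset_powersetCard_univ_iff.2 hF₀, hδ, ?_⟩
  cases isEmpty_or_nonempty V
  · have hF₀_empty : F₀ = ∅ :=
      eq_empty_of_forall_notMem fun e he => by simpa [e.eq_empty_of_isEmpty] using hF₀ he
    simp [hF₀_empty]
  · exact (Nat.le_mul_of_pos_left _ Fintype.card_pos).trans hcard
end

section
/- Let V be a finite set with |V| = n ≥ 2, let p be a probability distribution on V, and let U ⊆ V satisfy ∅ ≠ U ≠ V. Then there is a subset U₀ ⊆ V such that δU₀ = δU and p(U₀) < p(δU). -/
/-- Coboundary of a set of vertices: the edges meeting `U` in an odd number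
of elements. -/
def cobV {V : Type*} [Fintype V] [DecidableEq V] (U : Finset V) :
    Finset (Finset V) :=
  (edgesOn V).filter (fun e => Odd (e ∩ U).card)

/-!
Since `δU = δUᶜ`, we may assume `p(U) ≤ p(Uᶜ)`. Counting the edges of `δU` at each vertex,
`∑_{uv ∈ δU} (p(u) + p(v)) = |Uᶜ| p(U) + |U| p(Uᶜ)`. In the second term, replacing `|U| - 1` of the
`|U|` copies of `p(Uᶜ)` by `p(U)` does not increase it, and dropping the last copy decreases it
strictly because `p(Uᶜ) > 0`; what remains is `(|Uᶜ| + |U| - 1) p(U) = (n - 1) p(U)`.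
-/

theorem injOn_pair_of_disjoint {α : Type*} [DecidableEq α] {s t : Set α} (hst : Disjoint s t) :
    (s ×ˢ t).InjOn fun x ↦ ({x.1, x.2} : Finset α) := by
  rintro ⟨a, b⟩ ⟨ha, _⟩ ⟨c, d⟩ ⟨_, hd⟩ hpair
  have had : a ≠ d := hst.ne_of_mem ha hd
  have hset : ({a, b} : Set α) = {c, d} := by
    rw [← Finset.coe_pair, ← Finset.coe_pair, Finset.coe_inj]
    exact hpair
  rcases Set.pair_eq_pair_iff.mp hset with ⟨rfl, rfl⟩ | ⟨had', -⟩
  · rfl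
  · exact absurd had' had

section Coboundary

variable {V M : Type*} [Fintype V] [DecidableEq V]

theorem cobV_compl (U : Finset V) : cobV Uᶜ = cobV U := by
  refine Finset.filter_congr fun e he ↦ ?_
  have hcard : (e ∩ U).card + (e ∩ Uᶜ).card = 2 := by
    rw [← Finset.sdiff_eq_inter_compl, Finset.card_inter_add_card_sdiff]
    exact (Finset.mem_powersetCard.mp he).2
  grind

theorem mem_cobV {U e : Finset V} : e ∈ cobV U ↔ ∃ u ∈ U, ∃ v ∈ Uᶜ, {u, v} = e := by
  simp only [cobV, edgesOn, Finset.mem_filter, Finset.mem_powersetCard_univ, Finset.mem_compl]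
  constructor
  · rintro ⟨he, hodd⟩
    obtain ⟨a, b, hab, rfl⟩ := Finset.card_eq_two.mp he
    by_cases ha : a ∈ U <;> by_cases hb : b ∈ U
    · simp [Finset.insert_inter_of_mem, ha, hb, hab, Nat.odd_iff] at hodd
    · exact ⟨a, ha, b, hb, rfl⟩
    · exact ⟨b, hb, a, ha, Finset.pair_comm b a⟩
    · simp [Finset.insert_inter_of_notMem, ha, hb] at hodd
  · rintro ⟨u, hu, v, hv, rfl⟩
    have huv : u ≠ v := ne_of_mem_of_not_mem hu hv
    simp [Finset.card_pair huv, Finset.insert_inter_of_mem hu, Finset.singleton_inter_of_notMem hv]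

theorem cobV_eq_image (U : Finset V) : cobV U = (U ×ˢ Uᶜ).image fun x ↦ {x.1, x.2} := by
  ext e
  simp only [mem_cobV, Finset.mem_image, Finset.mem_product, Prod.exists, and_assoc,
    exists_and_left]

theorem sum_cobV [AddCommMonoid M] (U : Finset V) (f : Finset V → M) :
    ∑ e ∈ cobV U, f e = ∑ u ∈ U, ∑ v ∈ Uᶜ, f {u, v} := by
  have hinj : Set.InjOn (fun x : V × V ↦ ({x.1, x.2} : Finset V)) ↑(U ×ˢ Uᶜ) := by
    rw [Finset.coe_product]
    exact injOn_pair_of_disjoint (Finset.disjoint_coe.mpr disjoint_compl_right)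
  rw [cobV_eq_image, Finset.sum_image hinj, Finset.sum_product]

theorem sum_cobV_sum [AddCommMonoid M] (U : Finset V) (p : V → M) :
    ∑ e ∈ cobV U, ∑ v ∈ e, p v = Uᶜ.card • ∑ v ∈ U, p v + U.card • ∑ v ∈ Uᶜ, p v :=
  calc
    ∑ e ∈ cobV U, ∑ v ∈ e, p v = ∑ u ∈ U, ∑ v ∈ Uᶜ, ∑ w ∈ {u, v}, p w := sum_cobV U _
    _ = ∑ u ∈ U, ∑ v ∈ Uᶜ, (p u + p v) :=
      Finset.sum_congr rfl fun _ hu ↦ Finset.sum_congr rfl fun _ hv ↦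
        Finset.sum_pair (ne_of_mem_of_not_mem hu (Finset.mem_compl.mp hv))
    _ = Uᶜ.card • ∑ v ∈ U, p v + U.card • ∑ v ∈ Uᶜ, p v := by
      simp only [Finset.sum_add_distrib, Finset.sum_const, Finset.sum_nsmul]

theorem card_sub_one_nsmul_sum_lt_sum_cobV [AddCommMonoid M] [PartialOrder M]
    [IsOrderedCancelAddMonoid M] (p : V → M) {U : Finset V} (hU : U.Nonempty)
    (hle : ∑ v ∈ U, p v ≤ ∑ v ∈ Uᶜ, p v) (hpos : 0 < ∑ v ∈ Uᶜ, p v) :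
    (Fintype.card V - 1) • ∑ v ∈ U, p v < ∑ e ∈ cobV U, ∑ v ∈ e, p v := by
  have hcard : Fintype.card V - 1 = Uᶜ.card + (U.card - 1) := by
    have := U.card_compl_add_card
    have := hU.card_pos
    lia
  calc
    (Fintype.card V - 1) • ∑ v ∈ U, p v
      = Uᶜ.card • ∑ v ∈ U, p v + (U.card - 1) • ∑ v ∈ U, p v := by rw [hcard, add_nsmul]
    _ ≤ Uᶜ.card • ∑ v ∈ U, p v + (U.card - 1) • ∑ v ∈ Uᶜ, p v := by gcongr
    _ < Uᶜ.card • ∑ v ∈ U, p v + U.card • ∑ v ∈ Uᶜ, p v := by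
      gcongr
      exact Nat.sub_one_lt hU.card_ne_zero
    _ = ∑ e ∈ cobV U, ∑ v ∈ e, p v := (sum_cobV_sum U p).symm

theorem exists_cobV_eq_sum_le_sum_compl [AddCommMonoid M] [LinearOrder M] (p : V → M)
    {U : Finset V} (hU : U.Nonempty) (hUV : U ≠ Finset.univ) :
    ∃ U₀ : Finset V, U₀.Nonempty ∧ cobV U₀ = cobV U ∧ ∑ v ∈ U₀, p v ≤ ∑ v ∈ U₀ᶜ, p v := by
  rcases le_total (∑ v ∈ U, p v) (∑ v ∈ Uᶜ, p v) with hle | hge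
  · exact ⟨U, hU, rfl, hle⟩
  · refine ⟨Uᶜ, ?_, cobV_compl U, by rwa [compl_compl]⟩
    rwa [Finset.nonempty_iff_ne_empty, Ne, Finset.compl_eq_empty_iff]

theorem stmt_5_general {K : Type*} [Field K] [LinearOrder K] [IsStrictOrderedRing K]
    (p : V → K) (hp : 0 < ∑ v, p v) {U : Finset V} (hU : U.Nonempty) (hUV : U ≠ Finset.univ) :
    ∃ U₀ : Finset V, cobV U₀ = cobV U ∧
      ∑ v ∈ U₀, p v < ∑ e ∈ cobV U, (∑ v ∈ e, p v) / (Fintype.card V - 1 : K) := by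
  obtain ⟨U₀, hU₀, hcob, hle⟩ := exists_cobV_eq_sum_le_sum_compl p hU hUV
  refine ⟨U₀, hcob, ?_⟩
  have hpos : 0 < ∑ v ∈ U₀ᶜ, p v := by linarith [Finset.sum_add_sum_compl U₀ p]
  have hcard : 1 < Fintype.card V :=
    Nat.lt_of_le_of_lt hU.card_pos ((Finset.card_lt_iff_ne_univ U).mpr hUV)
  have hlt := card_sub_one_nsmul_sum_lt_sum_cobV p hU₀ hle hpos
  rw [nsmul_eq_mul, Nat.cast_pred (zero_lt_one.trans hcard), hcob] at hlt
  rwa [← Finset.sum_div, lt_div_iff₀' (sub_pos.mpr (Nat.one_lt_cast.mpr hcard))]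

end Coboundary

theorem stmt_5 {V : Type*} [Fintype V] [DecidableEq V]
    (n : ℕ) (hn : Fintype.card V = n) (hn2 : 2 ≤ n)
    (p : V → ℝ) (hp0 : ∀ v, 0 ≤ p v) (hp1 : ∑ v, p v = 1)
    (U : Finset V) (hUne : U ≠ ∅) (hUV : U ≠ Finset.univ) :
    ∃ U₀ : Finset V, cobV U₀ = cobV U ∧
      ∑ v ∈ U₀, p v < ∑ e ∈ cobV U, (∑ v ∈ e, p v) / (n - 1 : ℝ) := by
  subst hn
  exact stmt_5_general p (hp1 ▸ one_pos) (Finset.nonempty_iff_ne_empty.mpr hUne) hUV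
end

section
/- (Boros–Füredi) Let x₁,…,xₙ be n points in ℝ² in general position. Then there exists a point r ∈ ℝ² that belongs to the closed triangles (convex hulls) spanned by at least (2/9)·binom(n,3) of the binom(n,3) three-element subsets of the points. -/
/-- A family of points in the plane is in general position if the points are
pairwise distinct and no three of them are collinear. -/
def InGeneralPosition {ι : Type*} (x : ι → EuclideanSpace ℝ (Fin 2)) : Prop :=
  Function.Injective x ∧
    ∀ i j k : ι, i ≠ j → i ≠ k → j ≠ k →
      ¬ Collinear ℝ ({x i, x j, x k} : Set (EuclideanSpace ℝ (Fin 2)))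

/-!
Form the closed triangles of all `n ^ 3` ordered triples of points, with repetition, and suppose
that every `r` lies in fewer than `2 / 9` of them. Then for each `r` there is a point `v r` which
spans a triangle containing `r` with fewer than `2 / 9 * n ^ 2` ordered pairs. By compactness, `v r`
can be chosen to span a triangle that meets the ball of radius `ε` about `r` with fewer than
`2 / 9 * n ^ 2` pairs, where `ε > 0` does not depend on `r`.

Let `r` and `s` be at distance at most `ε`. The segment `[r, s]` and the rays from `r` and `s` away
from `v r` and `v s` form a curve with two sides. If it separates the points `a` and `b`, then
one of the triangles `{v r, a, b}` and `{v s, a, b}` meets `[r, s]`. Thus fewer than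
`4 / 9 * n ^ 2` pairs are separated, and more than two thirds of the points lie on one side; call it
`κ r s` in `ZMod 2`. Three sets of more than two thirds of the points have a common element, which
gives the cocycle identity for `κ` on small triples, and contracting a loop then shows that the sum
of `κ` along it is zero. Far away from the points, however, `κ r s` is the parity of the crossings
of `[r, s]` with a fixed ray, and a large circle crosses that ray once.

In general position only `O(n)` degenerate triples have a given `r` in their triangle, which is
absorbed by the difference between `n ^ 3` and `6 * n.choose 3` once `n` is not small. For small
`n`, the triangles at a single vertex suffice.
-/

local notation "Plane" => EuclideanSpace ℝ (Fin 2)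

section LocalCocycle

/-- A cochain on ordered pairs of points which satisfies the cocycle identity on all triples of
diameter at most `ε`. -/
def IsLocalCocycle {X A : Type*} [PseudoMetricSpace X] [Add A] (ε : ℝ) (κ : X → X → A) : Prop :=
  ∀ r s t, dist r s ≤ ε → dist s t ≤ ε → dist r t ≤ ε → κ r s + κ s t = κ r t

namespace IsLocalCocycle

variable {X E A : Type*} [PseudoMetricSpace X] [SeminormedAddCommGroup E] [NormedSpace ℝ E]
  [AddCommGroup A] {ε δ : ℝ}

lemma apply_self {κ : X → X → A} (hκ : IsLocalCocycle ε κ) (hε : 0 ≤ ε) (r : X) : κ r r = 0 := by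
  simpa [hε] using hκ r r r

lemma sum_range_add {κ : X → X → A} (hκ : IsLocalCocycle ε κ) {γ γ' : ℕ → X}
    (hγ : ∀ j, dist (γ j) (γ (j + 1)) ≤ ε) (hγ' : ∀ j, dist (γ' j) (γ' (j + 1)) ≤ ε)
    (hγγ' : ∀ j, dist (γ j) (γ' j) ≤ ε) (hdiag : ∀ j, dist (γ j) (γ' (j + 1)) ≤ ε) (N : ℕ) :
    ∑ j ∈ Finset.range N, κ (γ j) (γ (j + 1)) + κ (γ N) (γ' N) =
      κ (γ 0) (γ' 0) + ∑ j ∈ Finset.range N, κ (γ' j) (γ' (j + 1)) := by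
  induction N with
  | zero => simp
  | succ N ih =>
    have hupper := hκ _ _ _ (hγ N) (hγγ' (N + 1)) (hdiag N)
    have hlower := hκ _ _ _ (hγγ' N) (hγ' N) (hdiag N)
    rw [Finset.sum_range_succ, Finset.sum_range_succ, add_assoc, hupper, ← hlower, ← add_assoc,
      ih, add_assoc]

lemma sum_range_eq_of_closed {κ : X → X → A} (hκ : IsLocalCocycle ε κ) {γ γ' : ℕ → X}
    (hγ : ∀ j, dist (γ j) (γ (j + 1)) ≤ ε) (hγ' : ∀ j, dist (γ' j) (γ' (j + 1)) ≤ ε)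
    (hγγ' : ∀ j, dist (γ j) (γ' j) ≤ ε) (hdiag : ∀ j, dist (γ j) (γ' (j + 1)) ≤ ε) {N : ℕ}
    (hclosed : γ N = γ 0) (hclosed' : γ' N = γ' 0) :
    ∑ j ∈ Finset.range N, κ (γ j) (γ (j + 1)) =
      ∑ j ∈ Finset.range N, κ (γ' j) (γ' (j + 1)) := by
  have h := hκ.sum_range_add hγ hγ' hγγ' hdiag N
  rwa [hclosed, hclosed', add_comm, add_left_cancel_iff] at h

-- The path is contracted to the origin through the paths `(i / M) • γ`.
theorem sum_range_eq_zero_of_closed {κ : E → E → A} (hκ : IsLocalCocycle ε κ) (hδε : δ < ε)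
    {γ : ℕ → E} {ρ : ℝ} (hρ : ∀ j, ‖γ j‖ ≤ ρ) (hγ : ∀ j, dist (γ j) (γ (j + 1)) ≤ δ) {N : ℕ}
    (hclosed : γ N = γ 0) : ∑ j ∈ Finset.range N, κ (γ j) (γ (j + 1)) = 0 := by
  have hδ : 0 ≤ δ := dist_nonneg.trans (hγ 0)
  obtain ⟨M, hM⟩ := exists_nat_gt (ρ / (ε - δ))
  have hM0 : (0 : ℝ) < M :=
    (div_nonneg ((norm_nonneg _).trans (hρ 0)) (sub_nonneg.2 hδε.le)).trans_lt hM
  have hρM : ρ / M ≤ ε - δ := (div_lt_comm₀ hM0 (sub_pos.2 hδε)).2 hM |>.le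
  set g : ℕ → ℕ → E := fun i j => (i / M : ℝ) • γ j with hg
  have hrow : ∀ i ≤ M, ∀ j, dist (g i j) (g i (j + 1)) ≤ δ := fun i hi j => by
    rw [dist_smul₀, Real.norm_of_nonneg (by positivity)]
    exact (mul_le_of_le_one_left dist_nonneg
      (div_le_one_of_le₀ (Nat.cast_le.2 hi) hM0.le)).trans (hγ j)
  have hcol : ∀ i j, dist (g i j) (g (i + 1) j) ≤ ρ / M := fun i j => by
    rw [dist_comm, dist_eq_norm, ← sub_smul, ← sub_div, Nat.cast_succ, add_sub_cancel_left,
      norm_smul, Real.norm_of_nonneg (by positivity), one_div, inv_mul_eq_div]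
    gcongr
    exact hρ j
  have hcontract : ∀ i ≤ M, ∑ j ∈ Finset.range N, κ (g i j) (g i (j + 1)) = 0 := by
    intro i
    induction i with
    | zero => simp [hg, hκ.apply_self (hδ.trans hδε.le)]
    | succ i ih =>
      intro hi
      rw [← ih (Nat.le_of_succ_le hi)]
      symm
      refine hκ.sum_range_eq_of_closed (fun j => (hrow i (Nat.le_of_succ_le hi) j).trans hδε.le)
        (fun j => (hrow (i + 1) hi j).trans hδε.le)
        (fun j => (hcol i j).trans (by linarith)) (fun j => ?_)
        (by simp [hg, hclosed]) (by simp [hg, hclosed])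
      linarith [dist_triangle (g i j) (g (i + 1) j) (g (i + 1) (j + 1)), hcol i j,
        hrow (i + 1) hi j]
  simpa [hg, hM0.ne'] using hcontract M le_rfl

end IsLocalCocycle

end LocalCocycle

section Compact

variable {E : Type*} [AddCommGroup E] [Module ℝ E] [TopologicalSpace E]
  [IsTopologicalAddGroup E] [ContinuousSMul ℝ E]

lemma isCompact_convexHull_triple (a b c : E) : IsCompact (convexHull ℝ {a, b, c}) :=
  (Set.toFinite _).isCompact_convexHull ℝ

lemma isCompact_segment (a b : E) : IsCompact (segment ℝ a b) := by
  rw [← convexHull_pair]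
  exact (Set.toFinite _).isCompact_convexHull ℝ

end Compact

section AxisCrossing

/-- The parity of the number of crossings of the segment from `u` to `w` with the positive first
coordinate axis, where points on the axis count as lying below it. -/
noncomputable def axisCrossing (u w : Plane) : ZMod 2 :=
  if (0 < u 1 ∧ w 1 ≤ 0 ∧ 0 < w 0 * u 1 - u 0 * w 1) ∨
      (u 1 ≤ 0 ∧ 0 < w 1 ∧ 0 < u 0 * w 1 - w 0 * u 1) then 1 else 0

-- On the half-plane, the sign of `u 0 * w 1 - w 0 * u 1` for `u` below and `w` above the axis is
-- that of the value of `f` at the first basis vector.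
lemma exists_axisCrossing_eq_add (f : StrongDual ℝ Plane) :
    ∃ φ : Plane → ZMod 2, ∀ u w, 0 < f u → 0 < f w → axisCrossing u w = φ u + φ w := by
  set α := f (EuclideanSpace.single 0 1)
  have hcross : ∀ u w, α * (u 0 * w 1 - w 0 * u 1) = f u * w 1 - f w * u 1 := by
    have hf : ∀ u, f u = u 0 * α + u 1 * f (EuclideanSpace.single 1 1) := fun u => by
      conv_lhs => rw [← (EuclideanSpace.basisFun (Fin 2) ℝ).sum_repr u]
      simp [α]
    intro u w
    rw [hf u, hf w]
    ring
  have hpos : ∀ u w, 0 < f u → 0 < f w → u 1 ≤ 0 → 0 < w 1 →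
      0 < α * (u 0 * w 1 - w 0 * u 1) := fun u w hu hw hu₁ hw₁ => by
    rw [hcross]
    nlinarith [mul_pos hu hw₁]
  refine ⟨fun u => if 0 < α ∧ 0 < u 1 then 1 else 0, fun u w hu hw => ?_⟩
  unfold axisCrossing
  have h₁ := hpos u w hu hw
  have h₂ := hpos w u hw hu
  have hsign : ∀ c, 0 < α * c → (0 < c ↔ 0 < α) := fun c hc => (pos_iff_pos_of_mul_pos hc).symm
  rcases le_or_gt (u 1) 0 with hu₁ | hu₁ <;> rcases le_or_gt (w 1) 0 with hw₁ | hw₁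
  · simp [hu₁.not_gt, hw₁.not_gt]
  · simp [hu₁.not_gt, hu₁, hw₁, hsign _ (h₁ hu₁ hw₁)]
  · simp [hw₁.not_gt, hw₁, hu₁, hsign _ (h₂ hw₁ hu₁)]
  · simp [hu₁, hw₁, hu₁.not_ge, hw₁.not_ge, CharTwo.add_self_eq_zero]

lemma exists_axisCrossing_sub_eq_add {S T : Set Plane} (hS : Convex ℝ S) (hS' : IsCompact S)
    (hT : Convex ℝ T) (hT' : IsClosed T) (hST : Disjoint S T) :
    ∃ φ : Plane → ZMod 2, ∀ p ∈ S, ∀ q ∈ T, ∀ p' ∈ S, ∀ q' ∈ T,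
      axisCrossing (q - p) (q' - p') = φ (q - p) + φ (q' - p') := by
  obtain ⟨f, b, c, hfS, hbc, hfT⟩ := geometric_hahn_banach_compact_closed hS hS' hT hT' hST
  obtain ⟨φ, hφ⟩ := exists_axisCrossing_eq_add f
  have hpos : ∀ p ∈ S, ∀ q ∈ T, 0 < f (q - p) := fun p hp q hq => by
    rw [map_sub, sub_pos]
    exact (hfS p hp).trans (hbc.trans (hfT q hq))
  exact ⟨φ, fun p hp q hq p' hp' q' hq' => hφ _ _ (hpos p hp q hq) (hpos p' hp' q' hq')⟩

lemma mem_convexHull_of_sum_axisCrossing_ne_zero {p r s t : Plane}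
    (h : axisCrossing (r - p) (s - p) + axisCrossing (s - p) (t - p) +
      axisCrossing (r - p) (t - p) ≠ 0) : p ∈ convexHull ℝ {r, s, t} := by
  contrapose! h
  obtain ⟨φ, hφ⟩ := exists_axisCrossing_sub_eq_add (convex_singleton p) isCompact_singleton
    (convex_convexHull ℝ {r, s, t}) (isCompact_convexHull_triple r s t).isClosed
    (Set.disjoint_singleton_left.2 h)
  have hmem : {r, s, t} ⊆ convexHull ℝ {r, s, t} := subset_convexHull ℝ _
  simp only [Set.insert_subset_iff, Set.singleton_subset_iff] at hmem
  obtain ⟨hr, hs, ht⟩ := hmem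
  rw [hφ p rfl r hr p rfl s hs, hφ p rfl s hs p rfl t ht, hφ p rfl r hr p rfl t ht]
  grind

end AxisCrossing

section Circle

/-- The point of the circle of radius `ρ` about the origin with angle `t`. -/
noncomputable def circlePoint (ρ t : ℝ) : Plane := !₂[ρ * Real.cos t, ρ * Real.sin t]

variable {ρ θ : ℝ}

lemma circlePoint_add_two_pi (ρ t : ℝ) : circlePoint ρ (t + 2 * Real.pi) = circlePoint ρ t := by
  simp [circlePoint]

lemma norm_circlePoint (hρ : 0 ≤ ρ) (t : ℝ) : ‖circlePoint ρ t‖ = ρ := by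
  rw [EuclideanSpace.norm_eq, Real.sqrt_eq_iff_mul_self_eq (by positivity) hρ]
  simp only [circlePoint, Fin.sum_univ_two, Real.norm_eq_abs, sq_abs, Matrix.cons_val]
  linear_combination ρ ^ 2 * Real.sin_sq_add_cos_sq t

lemma dist_circlePoint_add_le (hρ : 0 ≤ ρ) (hθ : 0 ≤ θ) (t : ℝ) :
    dist (circlePoint ρ t) (circlePoint ρ (t + θ)) ≤ ρ * θ := by
  rw [EuclideanSpace.dist_eq]
  refine Real.sqrt_le_iff.2 ⟨by positivity, ?_⟩
  simp only [circlePoint, Fin.sum_univ_two, Real.dist_eq, sq_abs, Matrix.cons_val]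
  have hcos := Real.one_sub_sq_div_two_le_cos (x := θ)
  rw [Real.cos_add, Real.sin_add]
  calc
    _ = 2 * ρ ^ 2 * (1 - Real.cos θ) := by
      linear_combination
        ρ ^ 2 * (Real.cos θ ^ 2 + Real.sin θ ^ 2 + 1 - 2 * Real.cos θ) * Real.sin_sq_add_cos_sq t
          + ρ ^ 2 * Real.sin_sq_add_cos_sq θ
    _ ≤ 2 * ρ ^ 2 * (θ ^ 2 / 2) := by
      gcongr
      linarith
    _ = (ρ * θ) ^ 2 := by ring

lemma axisCrossing_circlePoint (hρ : 0 < ρ) (hθ : 0 < θ) (hθπ : θ < Real.pi) (t : ℝ) :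
    axisCrossing (circlePoint ρ t) (circlePoint ρ (t + θ)) =
      if Real.sin t ≤ 0 ∧ 0 < Real.sin (t + θ) then 1 else 0 := by
  have hcross : ρ * Real.cos t * (ρ * Real.sin (t + θ)) - ρ * Real.cos (t + θ) * (ρ * Real.sin t) =
      ρ ^ 2 * Real.sin θ := by
    rw [← add_sub_cancel_left t θ, Real.sin_sub, add_sub_cancel_left]
    ring
  have hsin : 0 < ρ ^ 2 * Real.sin θ := by
    have := Real.sin_pos_of_pos_of_lt_pi hθ hθπ
    positivity
  have hcross' : ρ * Real.cos (t + θ) * (ρ * Real.sin t) - ρ * Real.cos t * (ρ * Real.sin (t + θ)) =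
      -(ρ ^ 2 * Real.sin θ) := by rw [← hcross, neg_sub]
  have hnonpos : ∀ y, ρ * y ≤ 0 ↔ y ≤ 0 := fun y => by
    rw [← not_lt, mul_pos_iff_of_pos_left hρ, not_lt]
  simp [axisCrossing, circlePoint, hcross, hcross', hsin, hsin.not_gt, hρ, hnonpos]

lemma sum_axisCrossing_circlePoint (hρ : 0 < ρ) {N : ℕ} (hN : 2 < N) :
    ∑ j ∈ Finset.range N, axisCrossing (circlePoint ρ (j * (2 * Real.pi / N)))
      (circlePoint ρ ((j + 1 : ℕ) * (2 * Real.pi / N))) = 1 := by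
  have hN' : (2 : ℝ) < N := by exact_mod_cast hN
  have hπ := Real.pi_pos
  set θ := 2 * Real.pi / N with hθ
  have hθN : N * θ = 2 * Real.pi := by
    rw [hθ]
    field_simp
  have hθ0 : 0 < θ := by positivity
  have hθπ : θ < Real.pi := by nlinarith
  simp only [Nat.cast_succ, add_one_mul, axisCrossing_circlePoint hρ hθ0 hθπ]
  rw [Finset.sum_eq_single_of_mem 0 (by simp; omega)]
  · simp [Real.sin_pos_of_pos_of_lt_pi hθ0 hθπ]
  intro j hj hj0
  rw [if_neg]
  rintro ⟨hsin, hsin'⟩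
  have hjN : (j + 1 : ℝ) ≤ N := by exact_mod_cast Finset.mem_range.1 hj
  have hπj : Real.pi ≤ j * θ := by
    by_contra! hlt
    exact hsin.not_gt (Real.sin_pos_of_pos_of_lt_pi (by positivity) hlt)
  have hsub : 0 ≤ Real.sin (j * θ + θ - Real.pi) :=
    Real.sin_nonneg_of_nonneg_of_le_pi (by linarith) (by nlinarith)
  rw [Real.sin_sub_pi] at hsub
  linarith

theorem IsLocalCocycle.exists_ne_axisCrossing {ε : ℝ} (hε : 0 < ε) {κ : Plane → Plane → ZMod 2}
    (hκ : IsLocalCocycle ε κ) (R : ℝ) :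
    ∃ r s, R < ‖r‖ ∧ dist r s ≤ ε ∧ κ r s ≠ axisCrossing r s := by
  by_contra! hfar
  obtain ⟨ρ, hρ, hRρ⟩ : ∃ ρ, 0 < ρ ∧ R < ρ := ⟨max R 0 + 1, by positivity, by grind⟩
  obtain ⟨N, hN⟩ := exists_nat_gt (max 2 (ρ * (2 * Real.pi) / (ε / 2)))
  obtain ⟨hN2, hNε⟩ := max_lt_iff.1 hN
  have hN0 : (0 : ℝ) < N := two_pos.trans hN2
  set θ := 2 * Real.pi / N with hθ
  have hstep : ρ * θ ≤ ε / 2 := by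
    rw [hθ, ← mul_div_assoc]
    exact ((div_lt_comm₀ hN0 (by positivity)).2 hNε).le
  set γ : ℕ → Plane := fun j => circlePoint ρ (j * θ) with hγ
  have hnorm : ∀ j, ‖γ j‖ = ρ := fun j => norm_circlePoint hρ.le _
  have hdist : ∀ j, dist (γ j) (γ (j + 1)) ≤ ε / 2 := fun j => by
    simp only [hγ, Nat.cast_succ, add_one_mul]
    exact (dist_circlePoint_add_le hρ.le (by positivity) _).trans hstep
  have hclosed : γ N = γ 0 := by
    have : N * θ = 0 + 2 * Real.pi := by
      rw [hθ]
      field_simp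
      ring
    simp only [hγ, this, circlePoint_add_two_pi, Nat.cast_zero, zero_mul]
  have hsum := hκ.sum_range_eq_zero_of_closed (half_lt_self hε) (fun j => (hnorm j).le) hdist
    hclosed
  rw [Finset.sum_congr rfl fun j _ => hfar (γ j) (γ (j + 1)) (hRρ.trans_eq (hnorm j).symm)
    ((hdist j).trans (half_le_self hε.le)),
    sum_axisCrossing_circlePoint hρ (by exact_mod_cast hN2)] at hsum
  exact one_ne_zero hsum

end Circle

section Majority

/-- The value `κ` is taken by the colouring `c` on more than two thirds of the points. -/
def IsMajority {ι : Type*} [Fintype ι] (c : ι → ZMod 2) (κ : ZMod 2) : Prop :=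
  3 * (Finset.univ.filter fun a => c a ≠ κ).card < Fintype.card ι

variable {ι : Type*} [Fintype ι]

lemma exists_isMajority {c : ι → ZMod 2} {D : Finset (ι × ι)}
    (hD : 9 * D.card < 4 * Fintype.card ι ^ 2) (h : ∀ a b, c a ≠ c b → (a, b) ∈ D) :
    ∃ κ, IsMajority c κ := by
  classical
  set S := Finset.univ.filter fun a => c a ≠ 0 with hS
  have hsub : S ×ˢ Sᶜ ∪ Sᶜ ×ˢ S ⊆ D := by
    rintro ⟨a, b⟩ hab
    refine h a b fun hc => ?_
    simp [hS, hc] at hab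
  have hcard := Finset.card_le_card hsub
  rw [Finset.card_union_of_disjoint
    (Finset.disjoint_product.2 (Or.inl disjoint_compl_right)), Finset.card_product,
    Finset.card_product] at hcard
  have hcompl : S.card + Sᶜ.card = Fintype.card ι := Finset.card_add_card_compl S
  have hsmall : 3 * S.card < Fintype.card ι ∨ 3 * Sᶜ.card < Fintype.card ι := by
    by_contra! hlarge
    rw [← hcompl] at hD hlarge
    have h₁ : (0 : ℤ) ≤ 2 * S.card - Sᶜ.card := by omega
    have h₂ : (0 : ℤ) ≤ 2 * Sᶜ.card - S.card := by omega
    zify at hD hcard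
    nlinarith [mul_nonneg h₁ h₂]
  rcases hsmall with h₀ | h₁
  · exact ⟨0, h₀⟩
  · refine ⟨1, ?_⟩
    have hne_one : ∀ z : ZMod 2, z ≠ 1 ↔ z = 0 := by decide
    have : (Finset.univ.filter fun a => c a ≠ 1) = Sᶜ := by
      ext a
      simp [hS, hne_one]
    rwa [IsMajority, this]

namespace IsMajority

variable {c c₁ c₂ c₃ : ι → ZMod 2} {κ κ₁ κ₂ κ₃ : ZMod 2}

lemma exists_apply_eq (h : IsMajority c κ) : ∃ a, c a = κ := by
  by_contra! hne
  simp only [IsMajority, ne_eq, hne, not_false_eq_true, Finset.filter_true, Finset.card_univ] at h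
  omega

-- Three sets of fewer than a third of the points each do not cover all the points.
lemma add_eq_of_add_eq (h₁ : IsMajority c₁ κ₁) (h₂ : IsMajority c₂ κ₂) (h₃ : IsMajority c₃ κ₃)
    (h : ∀ a, c₁ a + c₂ a = c₃ a) : κ₁ + κ₂ = κ₃ := by
  classical
  by_contra hκ
  have hcover : (Finset.univ : Finset ι) ⊆ (Finset.univ.filter fun a => c₁ a ≠ κ₁) ∪
      (Finset.univ.filter fun a => c₂ a ≠ κ₂) ∪ (Finset.univ.filter fun a => c₃ a ≠ κ₃) := by
    intro a _
    by_contra ha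
    simp only [Finset.mem_union, Finset.mem_filter, Finset.mem_univ, true_and, not_or,
      not_not] at ha
    obtain ⟨⟨rfl, rfl⟩, rfl⟩ := ha
    exact hκ (h a)
  have := (Finset.card_le_card hcover).trans ((Finset.card_union_le _ _).trans
    (Nat.add_le_add_right (Finset.card_union_le _ _) _))
  rw [Finset.card_univ] at this
  unfold IsMajority at h₁ h₂ h₃
  omega

end IsMajority

end Majority

section Side

variable {ι : Type*} {x : ι → Plane} {r s : Plane}

/-- The colour of the `a`-th point with respect to the closed curve formed by the segment `[r, s]`
and the rays from `r` and `s` away from the `v`-th and the `w`-th point, closed up at infinity: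
the parity of the axis crossings of the path `r`, `r - x v`, `r - x a`, `s - x a`, `s - x w`, `s`.
Ending at `r` and `s` makes every colour equal to `axisCrossing r s` when `r` and `s` are far
away. -/
noncomputable def side (x : ι → Plane) (r s : Plane) (v w a : ι) : ZMod 2 :=
  axisCrossing (r - x a) (r - x v) + axisCrossing (r - x v) r +
    (axisCrossing (s - x a) (s - x w) + axisCrossing (s - x w) s) +
      axisCrossing (r - x a) (s - x a)

lemma side_add_side (x : ι → Plane) (r s t : Plane) (u v w a : ι) :
    side x r s u v a + side x s t v w a = side x r t u w a +
      (axisCrossing (r - x a) (s - x a) + axisCrossing (s - x a) (t - x a) +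
        axisCrossing (r - x a) (t - x a)) := by
  unfold side
  grind

lemma side_eq_side_of_disjoint {v w a b : ι}
    (hv : Disjoint (convexHull ℝ {x v, x a, x b}) (segment ℝ r s))
    (hw : Disjoint (convexHull ℝ {x w, x a, x b}) (segment ℝ r s)) :
    side x r s v w a = side x r s v w b := by
  have hcoboundary := fun c d e => exists_axisCrossing_sub_eq_add
    (convex_convexHull ℝ {c, d, e}) (isCompact_convexHull_triple c d e)
    (convex_segment r s) (isCompact_segment r s).isClosed
  obtain ⟨φ, hφ⟩ := hcoboundary _ _ _ hv
  obtain ⟨ψ, hψ⟩ := hcoboundary _ _ _ hw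
  have hmem : ∀ c d e : Plane, {c, d, e} ⊆ convexHull ℝ {c, d, e} := fun _ _ _ =>
    subset_convexHull ℝ _
  simp only [Set.insert_subset_iff, Set.singleton_subset_iff] at hmem
  obtain ⟨hv, ha, hb⟩ := hmem (x v) (x a) (x b)
  obtain ⟨hw, ha', hb'⟩ := hmem (x w) (x a) (x b)
  have hr := left_mem_segment ℝ r s
  have hs := right_mem_segment ℝ r s
  have hab := (hφ _ ha _ hs _ hb _ hs).symm.trans (hψ _ ha' _ hs _ hb' _ hs)
  rw [side, side, hφ _ ha _ hr _ hv _ hr, hφ _ hb _ hr _ hv _ hr, hφ _ ha _ hr _ ha _ hs,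
    hφ _ hb _ hr _ hb _ hs, hψ _ ha' _ hs _ hw _ hs, hψ _ hb' _ hs _ hw _ hs]
  linear_combination hab + (φ (r - x a) - φ (r - x b) + ψ (s - x a) - φ (s - x b)) *
    (CharTwo.two_eq_zero (R := ZMod 2))

lemma side_eq_axisCrossing {C : Set Plane} (hC : Convex ℝ C) (hC' : IsCompact C)
    (hxC : ∀ a, x a ∈ C) (h0 : 0 ∈ C) (hrs : Disjoint C (segment ℝ r s)) (v w a : ι) :
    side x r s v w a = axisCrossing r s := by
  obtain ⟨φ, hφ⟩ := exists_axisCrossing_sub_eq_add hC hC' (convex_segment r s)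
    (isCompact_segment r s).isClosed hrs
  have hr := left_mem_segment ℝ r s
  have hs := right_mem_segment ℝ r s
  have hr₀ := hφ _ (hxC v) _ hr _ h0 _ hr
  have hs₀ := hφ _ (hxC w) _ hs _ h0 _ hs
  have hrs₀ := hφ _ h0 _ hr _ h0 _ hs
  rw [sub_zero] at hr₀ hs₀
  rw [sub_zero, sub_zero] at hrs₀
  rw [side, hr₀, hs₀, hrs₀, hφ _ (hxC a) _ hr _ (hxC v) _ hr, hφ _ (hxC a) _ hs _ (hxC w) _ hs,
    hφ _ (hxC a) _ hr _ (hxC a) _ hs]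
  grind

end Side

section HitPairs

lemma exists_pos_forall_closedBall_inter {X κ : Type*} [MetricSpace X] [Finite κ]
    {C : κ → Set X} (hC : ∀ i, IsCompact (C i)) :
    ∃ ε > 0, ∀ r, ∃ s, ∀ i, (C i ∩ Metric.closedBall r ε).Nonempty → s ∈ C i := by
  have hopen : ∀ s, IsOpen (⋂ i : {i // s ∉ C i}, (C i)ᶜ) := fun s =>
    isOpen_iInter_of_finite fun i => (hC i).isClosed.isOpen_compl
  obtain ⟨δ, hδ, hball⟩ := lebesgue_number_lemma_of_metric (isCompact_iUnion hC) hopen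
    fun s _ => Set.mem_iUnion.2 ⟨s, Set.mem_iInter.2 fun i => i.2⟩
  refine ⟨δ / 3, by positivity, fun r => ?_⟩
  by_cases hr : ∃ i, (C i ∩ Metric.closedBall r (δ / 3)).Nonempty
  · obtain ⟨i, p, hp, hpr⟩ := hr
    obtain ⟨s, hs⟩ := hball p (Set.mem_iUnion_of_mem i hp)
    refine ⟨s, fun j ⟨q, hq, hqr⟩ => ?_⟩
    by_contra hsj
    have hqp : dist q p < δ := by
      linarith [dist_triangle_right q p r, Metric.mem_closedBall.1 hpr, Metric.mem_closedBall.1 hqr]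
    exact Set.mem_iInter.1 (hs hqp) ⟨j, hsj⟩ hq
  · exact ⟨r, fun i hi => absurd ⟨i, hi⟩ hr⟩
variable {ι : Type*} [Fintype ι] {x : ι → Plane}

open Classical in
/-- The ordered pairs of indices, with repetition allowed, which together with `v` span a triangle
that meets `S`. -/
noncomputable def hitPairs (x : ι → Plane) (S : Set Plane) (v : ι) : Finset (ι × ι) :=
  Finset.univ.filter fun p => (convexHull ℝ {x v, x p.1, x p.2} ∩ S).Nonempty

lemma mem_hitPairs {S : Set Plane} {v : ι} {p : ι × ι} :
    p ∈ hitPairs x S v ↔ (convexHull ℝ {x v, x p.1, x p.2} ∩ S).Nonempty := by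
  simp [hitPairs]

lemma hitPairs_mono {S T : Set Plane} (h : S ⊆ T) (v : ι) : hitPairs x S v ⊆ hitPairs x T v :=
  fun _ hp => mem_hitPairs.2 ((mem_hitPairs.1 hp).mono (Set.inter_subset_inter_right _ h))

lemma mem_hitPairs_of_mem {S : Set Plane} {a b : ι} (h : x a ∈ S ∨ x b ∈ S) (v : ι) :
    (a, b) ∈ hitPairs x S v := by
  rw [mem_hitPairs]
  rcases h with h | h
  · exact ⟨x a, subset_convexHull ℝ _ (by simp), h⟩
  · exact ⟨x b, subset_convexHull ℝ _ (by simp), h⟩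

lemma mem_hitPairs_of_side_ne {r s : Plane} {v w a b : ι}
    (h : side x r s v w a ≠ side x r s v w b) :
    (a, b) ∈ hitPairs x (segment ℝ r s) v ∨ (a, b) ∈ hitPairs x (segment ℝ r s) w := by
  contrapose! h
  simp only [mem_hitPairs, Set.not_nonempty_iff_eq_empty, ← Set.disjoint_iff_inter_eq_empty] at h
  exact side_eq_side_of_disjoint h.1 h.2

lemma exists_isMajority_of_hitPairs {c : ι → ZMod 2} {S T : Set Plane} {v w : ι}
    (hv : 9 * (hitPairs x S v).card < 2 * Fintype.card ι ^ 2)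
    (hw : 9 * (hitPairs x T w).card < 2 * Fintype.card ι ^ 2)
    (h : ∀ a b, c a ≠ c b → (a, b) ∈ hitPairs x S v ∨ (a, b) ∈ hitPairs x T w) :
    ∃ κ, IsMajority c κ := by
  classical
  refine exists_isMajority (D := hitPairs x S v ∪ hitPairs x T w) ?_ fun a b hab =>
    Finset.mem_union.2 (h a b hab)
  have := Finset.card_union_le (hitPairs x S v) (hitPairs x T w)
  omega

-- The sum of the first two colourings agrees with the third off the triangle `r s t`, hence it has
-- a majority of its own, and the points in the triangle are too few to change its value.
lemma add_eq_of_isMajority_side {r s t : Plane} {u v w : ι} {κ₁ κ₂ κ₃ : ZMod 2}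
    (hu : 9 * (hitPairs x (convexHull ℝ {r, s, t}) u).card < 2 * Fintype.card ι ^ 2)
    (hw : 9 * (hitPairs x (convexHull ℝ {r, s, t}) w).card < 2 * Fintype.card ι ^ 2)
    (h₁ : IsMajority (side x r s u v) κ₁) (h₂ : IsMajority (side x s t v w) κ₂)
    (h₃ : IsMajority (side x r t u w) κ₃) : κ₁ + κ₂ = κ₃ := by
  set Δ := convexHull ℝ {r, s, t}
  set τ : ι → ZMod 2 := fun a => axisCrossing (r - x a) (s - x a) +
    axisCrossing (s - x a) (t - x a) + axisCrossing (r - x a) (t - x a)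
  have hτΔ : ∀ a, τ a ≠ 0 → x a ∈ Δ := fun a => mem_convexHull_of_sum_axisCrossing_ne_zero
  have hsegment : segment ℝ r t ⊆ Δ := by
    rw [← convexHull_pair]
    exact convexHull_mono (by grind)
  have hτ_majority : IsMajority τ 0 := by
    have hsub : (Finset.univ.filter fun a => τ a ≠ 0) ×ˢ Finset.univ ⊆ hitPairs x Δ u := by
      rintro ⟨a, b⟩ hab
      refine mem_hitPairs_of_mem (Or.inl (hτΔ a ?_)) u
      simpa using hab
    have hcard := Finset.card_le_card hsub
    rw [Finset.card_product, Finset.card_univ] at hcard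
    unfold IsMajority
    by_contra! hlarge
    nlinarith
  obtain ⟨κ, hκ⟩ : ∃ κ, IsMajority (fun a => side x r t u w a + τ a) κ := by
    refine exists_isMajority_of_hitPairs hu hw fun a b hab => ?_
    by_cases hmem : x a ∈ Δ ∨ x b ∈ Δ
    · exact Or.inl (mem_hitPairs_of_mem hmem u)
    · rw [not_or] at hmem
      rw [not_not.1 (mt (hτΔ a) hmem.1), not_not.1 (mt (hτΔ b) hmem.2), add_zero, add_zero] at hab
      exact (mem_hitPairs_of_side_ne hab).imp (@hitPairs_mono _ _ _ _ _ hsegment u _)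
        (@hitPairs_mono _ _ _ _ _ hsegment w _)
  calc
    κ₁ + κ₂ = κ := h₁.add_eq_of_add_eq h₂ hκ (side_add_side x r s t u v w)
    _ = κ₃ := by rw [← h₃.add_eq_of_add_eq hτ_majority hκ fun _ => rfl, add_zero]

lemma exists_isLocalCocycle {ε : ℝ} (V : Plane → ι)
    (hV : ∀ r, 9 * (hitPairs x (Metric.closedBall r ε) (V r)).card < 2 * Fintype.card ι ^ 2) :
    ∃ κ : Plane → Plane → ZMod 2, IsLocalCocycle ε κ ∧
      ∃ R, ∀ r s, R < ‖r‖ → dist r s ≤ ε → κ r s = axisCrossing r s := by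
  have hmono : ∀ {r : Plane} {S}, S ⊆ Metric.closedBall r ε →
      9 * (hitPairs x S (V r)).card < 2 * Fintype.card ι ^ 2 := fun hS =>
    (Nat.mul_le_mul_left 9 (Finset.card_le_card (hitPairs_mono hS _))).trans_lt (hV _)
  have hsegment : ∀ {r s : Plane}, dist r s ≤ ε → segment ℝ r s ⊆ Metric.closedBall r ε :=
    fun {r s} h => (convex_closedBall r ε).segment_subset
      (Metric.mem_closedBall_self (dist_nonneg.trans h)) (Metric.mem_closedBall'.2 h)
  have hmajority : ∀ r s, dist r s ≤ ε → ∃ κ, IsMajority (side x r s (V r) (V s)) κ :=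
    fun r s h => exists_isMajority_of_hitPairs (hmono (hsegment h))
      (hmono ((segment_symm ℝ r s).trans_subset (hsegment (dist_comm r s ▸ h))))
      fun a b => mem_hitPairs_of_side_ne
  choose! κ hκ using hmajority
  refine ⟨κ, fun r s t hrs hst hrt => ?_, ?_⟩
  · have hΔ : ∀ p, dist r p ≤ ε → dist s p ≤ ε → dist t p ≤ ε →
        convexHull ℝ {r, s, t} ⊆ Metric.closedBall p ε := fun p hr hs ht =>
      convexHull_min (by simp [Set.insert_subset_iff, hr, hs, ht]) (convex_closedBall p ε)
    have hε := dist_nonneg.trans hrs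
    exact add_eq_of_isMajority_side
      (hmono (hΔ r (by simpa) (dist_comm r s ▸ hrs) (dist_comm r t ▸ hrt)))
      (hmono (hΔ t hrt hst (by simpa))) (hκ r s hrs) (hκ s t hst) (hκ r t hrt)
  · obtain ⟨R, hR⟩ := (Set.finite_range x).isBounded.subset_closedBall 0
    refine ⟨|R| + ε, fun r s hr hrs => ?_⟩
    have hdisj : Disjoint (Metric.closedBall 0 |R|) (segment ℝ r s) :=
      (Metric.closedBall_disjoint_closedBall (by rwa [dist_zero_left])).mono_right (hsegment hrs)
    obtain ⟨a, ha⟩ := (hκ r s hrs).exists_apply_eq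
    rw [← ha]
    exact side_eq_axisCrossing (convex_closedBall _ _) (isCompact_closedBall _ _)
      (fun a => Metric.closedBall_subset_closedBall (le_abs_self R) (hR (Set.mem_range_self a)))
      (Metric.mem_closedBall_self (abs_nonneg R)) hdisj _ _ a

theorem exists_two_mul_card_pow_three_le (x : ι → Plane) :
    ∃ r, 2 * Fintype.card ι ^ 3 ≤ 9 * ∑ v, (hitPairs x {r} v).card := by
  by_contra! hcon
  have hcheap : ∀ r, ∃ v, 9 * (hitPairs x {r} v).card < 2 * Fintype.card ι ^ 2 := fun r => by
    obtain ⟨v, -, hv⟩ := Finset.exists_lt_of_sum_lt (s := Finset.univ)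
      (f := fun v => 9 * (hitPairs x {r} v).card) (g := fun _ => 2 * Fintype.card ι ^ 2) (by
        rw [← Finset.mul_sum, Finset.sum_const, Finset.card_univ, smul_eq_mul]
        linarith [hcon r])
    exact ⟨v, hv⟩
  obtain ⟨ε, hε, hlocal⟩ := exists_pos_forall_closedBall_inter fun p : ι × ι × ι =>
    isCompact_convexHull_triple (x p.1) (x p.2.1) (x p.2.2)
  have huniform : ∀ r, ∃ v,
      9 * (hitPairs x (Metric.closedBall r ε) v).card < 2 * Fintype.card ι ^ 2 := fun r => by
    obtain ⟨s, hs⟩ := hlocal r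
    obtain ⟨v, hv⟩ := hcheap s
    refine ⟨v, (Nat.mul_le_mul_left 9 (Finset.card_le_card fun p hp => ?_)).trans_lt hv⟩
    exact mem_hitPairs.2 ⟨s, hs (v, p) (mem_hitPairs.1 hp), rfl⟩
  choose V hV using huniform
  obtain ⟨κ, hκ, R, hfar⟩ := exists_isLocalCocycle V hV
  obtain ⟨r, s, hr, hrs, hne⟩ := hκ.exists_ne_axisCrossing hε R
  exact hne (hfar r s hr hrs)

end HitPairs

section Counting

variable {ι : Type*} [Fintype ι] {x : ι → Plane}

open Classical in
/-- The three-element sets of indices whose triangles contain `r`. -/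
noncomputable def coveringTriangles (x : ι → Plane) (r : Plane) : Finset (Finset ι) :=
  (Finset.univ.powersetCard 3).filter fun t : Finset ι => r ∈ convexHull ℝ (x '' (t : Set ι))

lemma mem_coveringTriangles {r : Plane} {t : Finset ι} :
    t ∈ coveringTriangles x r ↔ t.card = 3 ∧ r ∈ convexHull ℝ (x '' (t : Set ι)) := by
  simp [coveringTriangles]

lemma choose_two_le_card_coveringTriangles (x : ι → Plane) (a : ι) :
    (Fintype.card ι - 1).choose 2 ≤ (coveringTriangles x (x a)).card := by
  classical
  rw [← Finset.card_univ, ← Finset.card_erase_of_mem (Finset.mem_univ a),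
    ← Finset.card_powersetCard]
  have ha : ∀ t ∈ (Finset.univ.erase a).powersetCard 2, a ∉ t := fun t ht h =>
    Finset.notMem_erase a _ ((Finset.mem_powersetCard.1 ht).1 h)
  refine Finset.card_le_card_of_injOn (insert a) (fun t ht => ?_) fun s hs t ht hst => ?_
  · refine mem_coveringTriangles.2 ⟨?_, subset_convexHull _ _ ⟨a, by simp, rfl⟩⟩
    rw [Finset.card_insert_of_notMem (ha t ht), (Finset.mem_powersetCard.1 ht).2]
  · rw [← Finset.erase_insert (ha s hs), hst, Finset.erase_insert (ha t ht)]

lemma InGeneralPosition.eq_of_mem_segment {ι : Type*} {x : ι → Plane} (hx : InGeneralPosition x)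
    {r : Plane} {a b c : ι} (ha : x a ≠ r) (hb : r ∈ segment ℝ (x a) (x b))
    (hc : r ∈ segment ℝ (x a) (x c)) : b = c := by
  have hne : ∀ {d}, r ∈ segment ℝ (x a) (x d) → a ≠ d := by
    rintro d hd rfl
    rw [segment_same] at hd
    exact ha hd.symm
  have hline : ∀ {d}, r ∈ segment ℝ (x a) (x d) → x d ∈ line[ℝ, x a, r] := fun hd =>
    (mem_segment_iff_wbtw.1 hd).right_mem_affineSpan_of_left_ne ha
  by_contra hbc
  exact hx.2 a b c (hne hb) (hne hc) hbc (collinear_triple_of_mem_affineSpan_pair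
    (left_mem_affineSpan_pair ℝ _ _) (hline hb) (hline hc))

open Classical in
lemma card_mem_segment_le (hx : InGeneralPosition x) (r : Plane) :
    (Finset.univ.filter fun p : ι × ι => r ∈ segment ℝ (x p.1) (x p.2)).card ≤
      2 * Fintype.card ι := by
  have hfibre : ∀ a, (Finset.univ.filter fun b => r ∈ segment ℝ (x a) (x b)).card ≤
      1 + if x a = r then Fintype.card ι else 0 := by
    intro a
    split_ifs with ha
    · exact (Finset.card_le_univ _).trans (Nat.le_add_left _ _)
    · exact Finset.card_le_one.2 fun b hb c hc =>
        hx.eq_of_mem_segment ha (Finset.mem_filter.1 hb).2 (Finset.mem_filter.1 hc).2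
  have hvertex : (Finset.univ.filter fun a => x a = r).card ≤ 1 :=
    Finset.card_le_one.2 fun a ha b hb =>
      hx.1 ((Finset.mem_filter.1 ha).2.trans (Finset.mem_filter.1 hb).2.symm)
  calc
    _ = ∑ a, (Finset.univ.filter fun b => r ∈ segment ℝ (x a) (x b)).card := by
      simp only [Finset.card_filter, Fintype.sum_prod_type]
    _ ≤ ∑ a, (1 + if x a = r then Fintype.card ι else 0) :=
      Finset.sum_le_sum fun a _ => hfibre a
    _ = Fintype.card ι + (Finset.univ.filter fun a => x a = r).card * Fintype.card ι := by
      simp [Finset.sum_add_distrib, ← Finset.sum_filter]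
    _ ≤ 2 * Fintype.card ι := by nlinarith

lemma card_le_six_mul_card_of_forall_mem {α : Type*} [DecidableEq α] {T : Finset (Finset α)}
    (hT : ∀ t ∈ T, t.card = 3) {P : Finset (α × α × α)}
    (hP : ∀ p ∈ P, {p.1, p.2.1, p.2.2} ∈ T) : P.card ≤ 6 * T.card := by
  refine Finset.card_le_mul_card_image_of_maps_to (f := fun p => {p.1, p.2.1, p.2.2}) hP 6 ?_
  intro t ht
  obtain ⟨a, b, c, hab, hac, hbc, rfl⟩ := Finset.card_eq_three.1 (hT t ht)
  refine (Finset.card_le_card (t := {(a, b, c), (a, c, b), (b, a, c), (b, c, a), (c, a, b),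
    (c, b, a)}) ?_).trans Finset.card_le_six
  rintro ⟨u, v, w⟩ hp
  have huvw : ({u, v, w} : Finset α) = {a, b, c} := (Finset.mem_filter.1 hp).2
  simp only [Finset.ext_iff, Finset.mem_insert, Finset.mem_singleton] at huvw
  have := huvw a
  have := huvw b
  have := huvw c
  have := huvw u
  have := huvw v
  have := huvw w
  simp only [Finset.mem_insert, Finset.mem_singleton, Prod.mk.injEq]
  grind

lemma card_le_three_mul_card_of_forall_mem {α : Type*} {Q : Finset (α × α)}
    {P : Finset (α × α × α)} (hP : ∀ p ∈ P, (p.1 = p.2.1 ∧ (p.1, p.2.2) ∈ Q) ∨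
      (p.1 = p.2.2 ∧ (p.1, p.2.1) ∈ Q) ∨ (p.2.1 = p.2.2 ∧ (p.1, p.2.1) ∈ Q)) :
    P.card ≤ 3 * Q.card := by
  classical
  have hsub : P ⊆ Q.image (fun p => (p.1, p.1, p.2)) ∪ Q.image (fun p => (p.1, p.2, p.1)) ∪
      Q.image fun p => (p.1, p.2, p.2) := by
    rintro ⟨a, b, c⟩ hp
    simp only [Finset.mem_union, Finset.mem_image]
    specialize hP _ hp
    dsimp only at hP
    rcases hP with ⟨rfl, hQ⟩ | ⟨rfl, hQ⟩ | ⟨rfl, hQ⟩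
    · exact Or.inl (Or.inl ⟨_, hQ, rfl⟩)
    · exact Or.inl (Or.inr ⟨_, hQ, rfl⟩)
    · exact Or.inr ⟨_, hQ, rfl⟩
  calc
    P.card ≤ _ := Finset.card_le_card hsub
    _ ≤ Q.card + Q.card + Q.card := (Finset.card_union_le _ _).trans (add_le_add
      ((Finset.card_union_le _ _).trans (add_le_add Finset.card_image_le Finset.card_image_le))
      Finset.card_image_le)
    _ = 3 * Q.card := by ring

lemma sum_card_hitPairs_le (hx : InGeneralPosition x) (r : Plane) :
    ∑ v, (hitPairs x {r} v).card ≤ 6 * (coveringTriangles x r).card + 6 * Fintype.card ι := by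
  classical
  set S := Finset.univ.filter fun p : ι × ι × ι => r ∈ convexHull ℝ {x p.1, x p.2.1, x p.2.2}
    with hS
  have hsum : ∑ v, (hitPairs x {r} v).card = S.card := by
    simp only [hS, hitPairs, Set.inter_singleton_nonempty, Finset.card_filter,
      Fintype.sum_prod_type]
  set distinct := fun p : ι × ι × ι => p.1 ≠ p.2.1 ∧ p.1 ≠ p.2.2 ∧ p.2.1 ≠ p.2.2
  have hdistinct : (S.filter distinct).card ≤ 6 * (coveringTriangles x r).card := by
    refine card_le_six_mul_card_of_forall_mem (fun t ht => (mem_coveringTriangles.1 ht).1)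
      fun p hp => ?_
    rw [hS, Finset.mem_filter, Finset.mem_filter] at hp
    obtain ⟨⟨-, hr⟩, h₁₂, h₁₃, h₂₃⟩ := hp
    refine mem_coveringTriangles.2 ⟨Finset.card_eq_three.2 ⟨_, _, _, h₁₂, h₁₃, h₂₃, rfl⟩, ?_⟩
    simpa [Set.image_insert_eq] using hr
  have hdegenerate : (S.filter fun p => ¬ distinct p).card ≤ 3 *
      (Finset.univ.filter fun p : ι × ι => r ∈ segment ℝ (x p.1) (x p.2)).card := by
    refine card_le_three_mul_card_of_forall_mem ?_
    rintro ⟨a, b, c⟩ hp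
    simp only [hS, distinct, Finset.mem_filter, Finset.mem_univ, true_and,
      ← convexHull_pair] at hp ⊢
    obtain ⟨hr, hp⟩ := hp
    have hcases : a = b ∨ a = c ∨ b = c := by tauto
    rcases hcases with rfl | rfl | rfl
    · exact Or.inl ⟨rfl, by simpa using hr⟩
    · refine Or.inr (Or.inl ⟨rfl, ?_⟩)
      simpa [Set.pair_comm (x b)] using hr
    · exact Or.inr (Or.inr ⟨rfl, by simpa using hr⟩)
  have hsplit := Finset.card_filter_add_card_filter_not (s := S) distinct
  have hsegment := card_mem_segment_le hx r
  omega

lemma cast_choose_three {K : Type*} [Field K] [CharZero K] (n : ℕ) :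
    (n.choose 3 : K) = n * (n - 1) * (n - 2) / 6 := by
  rw [Nat.cast_choose_eq_descPochhammer_div]
  simp [descPochhammer_succ_right, Nat.factorial]

lemma two_ninths_mul_choose_three_le_choose_two {n : ℕ} (hn : n ≤ 13) :
    (2 / 9 : ℝ) * n.choose 3 ≤ (n - 1).choose 2 := by
  rcases n with - | m
  · simp
  have hm : (m : ℝ) ≤ 12 := by exact_mod_cast Nat.le_of_succ_le_succ hn
  have hchoose : ((m : ℝ) + 1) * m.choose 2 = (m + 1).choose 3 * 3 := by
    exact_mod_cast Nat.add_one_mul_choose_eq m 2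
  have : (0 : ℝ) ≤ m.choose 2 := by positivity
  rw [Nat.add_sub_cancel]
  nlinarith

lemma two_ninths_mul_choose_three_le_of_two_mul_pow_three_le {n T : ℕ} (hn : 14 ≤ n)
    (h : 2 * n ^ 3 ≤ 9 * (6 * T + 6 * n)) : (2 / 9 : ℝ) * n.choose 3 ≤ T := by
  have hn' : (14 : ℝ) ≤ n := by exact_mod_cast hn
  have h' : (2 : ℝ) * n ^ 3 ≤ 9 * (6 * T + 6 * n) := by exact_mod_cast h
  rw [cast_choose_three]
  nlinarith

end Counting

open Classical in
-- The `↑t` in `stmt_9` elaborates to a coercion of the members of the family before it is filtered.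
lemma card_filter_coe {α : Type*} (S : Finset (Finset α)) (p : Set α → Prop) :
    (((S >>= fun t => pure (t : Set α)) : Finset (Set α)).filter p).card =
      (S.filter fun t : Finset α => p t).card := by
  have hS : ((S >>= fun t => pure (t : Set α)) : Finset (Set α)) =
      S.image fun t : Finset α => (t : Set α) := by
    ext s
    simp [Finset.bind_def, eq_comm]
  rw [hS, Finset.filter_image, Finset.card_image_of_injective _ Finset.coe_injective]

open Classical in
/-- Boros–Füredi: some point of the plane is covered by at least a `2/9`
fraction of the `n.choose 3` triangles spanned by `n` points in general
position. -/
theorem stmt_9 (n : ℕ) (x : Fin n → EuclideanSpace ℝ (Fin 2))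
    (hx : InGeneralPosition x) :
    ∃ r : EuclideanSpace ℝ (Fin 2),
      (2 / 9 : ℝ) * (n.choose 3) ≤
        (((Finset.univ : Finset (Fin n)).powersetCard 3).filter
          (fun t => r ∈ convexHull ℝ (x '' ↑t))).card := by
  suffices ∃ r, (2 / 9 : ℝ) * n.choose 3 ≤ (coveringTriangles x r).card by
    obtain ⟨r, hr⟩ := this
    exact ⟨r, by rwa [card_filter_coe _ fun s => r ∈ convexHull ℝ (x '' s)]⟩
  rcases Nat.eq_zero_or_pos n with rfl | hpos
  · exact ⟨0, by simp⟩
  rcases le_or_gt n 13 with hsmall | hlarge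
  · have hvertex := choose_two_le_card_coveringTriangles x ⟨0, hpos⟩
    rw [Fintype.card_fin] at hvertex
    exact ⟨x ⟨0, hpos⟩, (two_ninths_mul_choose_three_le_choose_two hsmall).trans
      (Nat.cast_le.2 hvertex)⟩
  · obtain ⟨r, hr⟩ := exists_two_mul_card_pow_three_le x
    have htriples := hr.trans (Nat.mul_le_mul_left 9 (sum_card_hitPairs_le hx r))
    rw [Fintype.card_fin] at htriples
    exact ⟨r, two_ninths_mul_choose_three_le_of_two_mul_pow_three_le hlarge htriples⟩
end

section
/- (Affine instance of the weighted overlap theorem) Let V be a finite set with |V| = n ≥ 3, let x : V → ℝ² assign to the elements of V points in general position, and let p be a probability distribution on V. Then there exists a point r ∈ ℝ² such that Σ_{t} p(t) ≥ 1/13 − 3/(13(n−1)), where the sum is over all 3-element subsets t ⊆ V with r ∈ conv{x(v) : v ∈ t}. -/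
/-!
By Helly's theorem some point `r` stays in the convex hull of the points after the removal of any
`m < n / 3` of them. Any such `r` lies in many triangles at each vertex `v`: put `r` at the origin
and let `L` be the points strictly to the left of the line from `r` to `v`, and `N` the points
other than `v` on the ray from `r` away from `v`. Every triangle formed by `v`, a point of `N` and
any third point contains `r`. Sort `L` by angle; since each half-plane through `r` contains more
than `m` points, `m < #L + #N`, and the `i`-th point of `L` completes `v` to a triangle around `r`
with at least `m - i` points outside `L`. This gives at least `m (m + 1) / 2` triangles at every
vertex, so the same `r` serves all probability distributions.
-/

section

open Finset Module

open scoped Pointwise RealInnerProductSpace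

section Depth

variable {𝕜 V E : Type*} [Field 𝕜] [LinearOrder 𝕜] [AddCommGroup E] [Module 𝕜 E]

variable (𝕜) in
/-- The point `r` stays in the convex hull of the family `x` after the removal of any `m` members,
that is, `r` has Tukey depth greater than `m` with respect to `x`. -/
def IsDeepPoint (x : V → E) (m : ℕ) (r : E) : Prop :=
  ∀ B : Finset V, #B ≤ m → r ∈ convexHull 𝕜 (x '' (↑B)ᶜ)

theorem zero_mem_convexHull_image_sub_iff (x : V → E) (r : E) (s : Set V) :
    0 ∈ convexHull 𝕜 ((fun v => x v - r) '' s) ↔ r ∈ convexHull 𝕜 (x '' s) := by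
  have himage : (fun v => x v - r) '' s = -r +ᵥ x '' s := by
    simp only [← Set.image_vadd, Set.image_image, vadd_eq_add, neg_add_eq_sub]
  rw [himage, convexHull_vadd, Set.mem_vadd_set_iff_neg_vadd_mem, neg_neg, vadd_eq_add, add_zero]

theorem IsDeepPoint.sub {x : V → E} {m : ℕ} {r : E} (hr : IsDeepPoint 𝕜 x m r) :
    IsDeepPoint 𝕜 (fun v => x v - r) m 0 :=
  fun B hB => (zero_mem_convexHull_image_sub_iff x r _).2 (hr B hB)

variable [IsStrictOrderedRing 𝕜]

theorem exists_isDeepPoint [FiniteDimensional 𝕜 E] [Fintype V] (x : V → E) {m : ℕ}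
    (hm : (finrank 𝕜 E + 1) * m < Fintype.card V) : ∃ r, IsDeepPoint 𝕜 x m r := by
  classical
  suffices h : (⋂ B ∈ ({B | #B ≤ m} : Finset (Finset V)), convexHull 𝕜 (x '' (↑B)ᶜ)).Nonempty by
    obtain ⟨r, hr⟩ := h
    exact ⟨r, fun B hB => Set.mem_iInter₂.1 hr B (by simpa using hB)⟩
  refine Convex.helly_theorem' (fun _ _ => convex_convexHull 𝕜 _) fun I hI hI_card => ?_
  have hunion : #(I.biUnion id) < Fintype.card V :=
    calc
      #(I.biUnion id) ≤ #I * m := card_biUnion_le_card_mul I id m fun B hB => by simpa using hI hB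
      _ ≤ (finrank 𝕜 E + 1) * m := Nat.mul_le_mul_right m hI_card
      _ < Fintype.card V := hm
  obtain ⟨v, -, hv⟩ := exists_mem_notMem_of_card_lt_card (hunion.trans_eq card_univ.symm)
  exact ⟨x v, Set.mem_iInter₂.2 fun B hB =>
    subset_convexHull 𝕜 _ ⟨v, fun hvB => hv (mem_biUnion.2 ⟨B, hB, hvB⟩), rfl⟩⟩

theorem convex_setOf_lex_lt_zero (f g : E →ₗ[𝕜] 𝕜) :
    Convex 𝕜 {z | f z < 0 ∨ f z = 0 ∧ 0 < g z} := by
  rw [convex_iff_forall_pos]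
  intro y hy z hz a b ha hb _
  simp only [Set.mem_ofPred_eq, map_add, map_smul, smul_eq_mul] at hy hz ⊢
  rcases hy with hy | ⟨hy, hy'⟩ <;> rcases hz with hz | ⟨hz, hz'⟩
  · exact Or.inl (add_neg (mul_neg_of_pos_of_neg ha hy) (mul_neg_of_pos_of_neg hb hz))
  · exact Or.inl (by simpa [hz] using mul_neg_of_pos_of_neg ha hy)
  · exact Or.inl (by simpa [hy] using mul_neg_of_pos_of_neg hb hz)
  · exact Or.inr ⟨by simp [hy, hz], by positivity⟩

theorem IsDeepPoint.lt_card_lex_nonneg [Fintype V] {x : V → E} {m : ℕ}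
    (hx : IsDeepPoint 𝕜 x m 0) (f g : E →ₗ[𝕜] 𝕜) :
    m < #{v | 0 < f (x v) ∨ f (x v) = 0 ∧ g (x v) ≤ 0} := by
  by_contra! hcard
  have hsubset : x '' (↑({v | 0 < f (x v) ∨ f (x v) = 0 ∧ g (x v) ≤ 0} : Finset V))ᶜ ⊆
      {z | f z < 0 ∨ f z = 0 ∧ 0 < g z} := by
    rintro _ ⟨v, hv, rfl⟩
    simp only [coe_filter, mem_univ, true_and, Set.mem_compl_iff, Set.mem_ofPred_eq, not_or, not_lt,
      not_and, not_le] at hv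
    exact hv.1.lt_or_eq.imp_right fun h => ⟨h, hv.2 h⟩
  simpa using convexHull_min hsubset (convex_setOf_lex_lt_zero f g) (hx _ hcard)

end Depth

section Triangles

variable (𝕜 : Type*) {V E : Type*} [Field 𝕜] [LinearOrder 𝕜] [AddCommGroup E] [Module 𝕜 E]
  [Fintype V] (x : V → E) (r : E) (v : V)

open Classical in
/-- The triples of points whose triangle contains `r`. -/
noncomputable def trianglesContaining : Finset (Finset V) :=
  (powersetCard 3 univ).filter fun t : Finset V => r ∈ convexHull 𝕜 (x '' ↑t)

variable {𝕜 x r} in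
theorem mem_trianglesContaining {t : Finset V} :
    t ∈ trianglesContaining 𝕜 x r ↔ #t = 3 ∧ r ∈ convexHull 𝕜 (x '' ↑t) := by
  simp [trianglesContaining, mem_powersetCard]

theorem trianglesContaining_sub :
    trianglesContaining 𝕜 (fun v => x v - r) 0 = trianglesContaining 𝕜 x r := by
  ext t
  rw [mem_trianglesContaining, mem_trianglesContaining, zero_mem_convexHull_image_sub_iff]

variable [DecidableEq V]

open Classical in
/-- The pairs of points that form a triangle containing `r` together with `x v`. -/
noncomputable def pairsAround : Finset (Finset V) :=
  (powersetCard 2 (univ.erase v)).filter fun s : Finset V =>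
    r ∈ convexHull 𝕜 (x '' ↑(insert v s))

variable {𝕜 x r v} in
theorem mem_pairsAround {s : Finset V} :
    s ∈ pairsAround 𝕜 x r v ↔ v ∉ s ∧ #s = 2 ∧ r ∈ convexHull 𝕜 (x '' ↑(insert v s)) := by
  simp [pairsAround, mem_powersetCard, subset_erase, and_assoc]

theorem card_pairsAround_le_card_trianglesContaining :
    #(pairsAround 𝕜 x r v) ≤ #{t ∈ trianglesContaining 𝕜 x r | v ∈ t} := by
  have hinj : Set.InjOn (insert v) (pairsAround 𝕜 x r v : Set (Finset V)) :=
    insert_erase_invOn.2.injOn.mono fun s hs => (mem_pairsAround.1 hs).1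
  refine card_le_card_of_injOn (insert v) (fun s hs => ?_) hinj
  obtain ⟨hvs, hs, hr⟩ := mem_pairsAround.1 hs
  refine mem_filter.2 ⟨mem_trianglesContaining.2 ⟨?_, hr⟩, mem_insert_self v s⟩
  rw [card_insert_of_notMem hvs, hs]

end Triangles

section Counting

variable {α : Type*}

theorem choose_two_le_sum_add_choose_two_of_le_add_card_filter_lt {β : Type*} [LinearOrder β]
    (key : α → β) (f : α → ℕ) (m k : ℕ) (s : Finset α) (hs : m < #s + k)
    (hf : ∀ u ∈ s, m ≤ f u + #{w ∈ s | key w < key u}) :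
    (m + 1).choose 2 ≤ ∑ u ∈ s, f u + k.choose 2 := by
  classical
  induction m generalizing s with
  | zero => simp
  | succ m ih =>
    obtain rfl | hne := s.eq_empty_or_nonempty
    · simpa using Nat.choose_le_choose 2 (by simpa using hs : m + 1 + 1 ≤ k)
    obtain ⟨u, hu, hmin⟩ := s.exists_min_image key hne
    have hfu : m + 1 ≤ f u := by
      simpa [filter_false_of_mem fun w hw => (hmin w hw).not_gt] using hf u hu
    have herase : (m + 1).choose 2 ≤ ∑ w ∈ s.erase u, f w + k.choose 2 := by
      refine ih _ (by rw [card_erase_of_mem hu]; omega) fun w hw => ?_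
      have hrank : #{z ∈ s | key z < key w} ≤ #{z ∈ s.erase u | key z < key w} + 1 := by
        rw [filter_erase]
        exact Nat.sub_le_iff_le_add.1 pred_card_le_card_erase
      have := hf w (mem_of_mem_erase hw)
      omega
    have hpascal : (m + 1 + 1).choose 2 = (m + 1) + (m + 1).choose 2 := by
      rw [Nat.choose_succ_succ', Nat.choose_one_right]
    rw [← add_sum_erase s f hu]
    omega

theorem injOn_pair_of_separated [DecidableEq α] (P : α → Prop) :
    Set.InjOn (fun e : (_ : α) × α => ({e.1, e.2} : Finset α)) {e | P e.1 ∧ ¬P e.2} := by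
  rintro ⟨a, b⟩ ⟨ha, hb⟩ ⟨c, d⟩ ⟨hc, hd⟩ h
  have h' : ∀ z, z = a ∨ z = b ↔ z = c ∨ z = d := by simpa [Finset.ext_iff] using h
  obtain rfl : a = c := ((h' a).1 (Or.inl rfl)).resolve_right fun h => hd (h ▸ ha)
  obtain rfl : b = d := ((h' b).1 (Or.inr rfl)).resolve_left fun h => hb (h ▸ ha)
  rfl

theorem mul_sum_le_sum_sum_of_le_card_filter_mem [Fintype α] [DecidableEq α] {R : Type*}
    [CommSemiring R] [PartialOrder R] [IsOrderedRing R] (G : Finset (Finset α)) {p : α → R}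
    (hp : ∀ v, 0 ≤ p v) {c : R} (hc : ∀ v, c ≤ #{t ∈ G | v ∈ t}) :
    c * ∑ v, p v ≤ ∑ t ∈ G, ∑ v ∈ t, p v :=
  calc
    c * ∑ v, p v ≤ ∑ v, #{t ∈ G | v ∈ t} * p v := by
      rw [mul_sum]
      exact sum_le_sum fun v _ => mul_le_mul_of_nonneg_right (hc v) (hp v)
    _ = ∑ v, ∑ t ∈ G with v ∈ t, p v := by simp only [sum_const, nsmul_eq_mul]
    _ = ∑ t ∈ G, ∑ v ∈ t, p v := sum_comm' (by simp [and_comm])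

end Counting

section Plane

variable {E : Type*} [NormedAddCommGroup E] [InnerProductSpace ℝ E] [Fact (finrank ℝ E = 2)]
  (o : Orientation ℝ E (Fin 2))

local notation "ω" => Orientation.areaForm o

theorem areaForm_smul_add_areaForm_smul_add_areaForm_smul_eq_zero (a b c : E) :
    ω b c • a + ω c a • b + ω a b • c = 0 := by
  refine ext_inner_left ℝ fun z => ?_
  obtain rfl | hz := eq_or_ne z 0
  · simp
  refine mul_left_cancel₀ (pow_ne_zero 2 (norm_ne_zero_iff.2 hz)) ?_
  simp only [inner_add_right, inner_smul_right, inner_zero_right]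
  linear_combination -⟪z, a⟫ * o.inner_mul_areaForm_sub z b c -
    ⟪z, b⟫ * o.inner_mul_areaForm_sub z c a - ⟪z, c⟫ * o.inner_mul_areaForm_sub z a b

theorem zero_mem_convexHull_of_areaForm {s : Set E} {a b c : E} (ha : a ∈ s) (hb : b ∈ s)
    (hc : c ∈ s) (hab : 0 < ω a b) (hbc : 0 ≤ ω b c) (hca : 0 ≤ ω c a) :
    0 ∈ convexHull ℝ s := by
  have hmem := univ.centerMass_mem_convexHull (w := ![ω b c, ω c a, ω a b]) (z := ![a, b, c])
    (s := s) (by simp [Fin.forall_fin_succ, hbc, hca, hab.le])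
    (by simpa [Fin.sum_univ_three] using by linarith) (by simp [Fin.forall_fin_succ, ha, hb, hc])
  simpa [centerMass, Fin.sum_univ_three,
    areaForm_smul_add_areaForm_smul_add_areaForm_smul_eq_zero] using hmem

theorem zero_mem_segment_of_areaForm_eq_zero {a b : E} (hω : ω a b = 0) (hab : ⟪a, b⟫ ≤ 0) :
    0 ∈ segment ℝ a b := by
  rw [mem_segment_iff_sameRay, zero_sub, sub_zero,
    ← o.nonneg_inner_and_areaForm_eq_zero_iff_sameRay]
  simpa using ⟨hab, hω⟩

theorem areaForm_pos_iff_inner_div_areaForm_lt {a b c : E} (hb : 0 < ω a b) (hc : 0 < ω a c) :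
    0 < ω b c ↔ ⟪a, c⟫ / ω a c < ⟪a, b⟫ / ω a b := by
  have ha : a ≠ 0 := by
    rintro rfl
    simp at hb
  rw [div_lt_div_iff₀ hc hb, ← sub_pos (b := ⟪a, c⟫ * _),
    mul_comm ⟪a, c⟫, o.inner_mul_areaForm_sub,
    mul_pos_iff_of_pos_left (pow_pos (norm_pos_iff.2 ha) 2)]

variable {V : Type*} [Fintype V] (y : V → E) (v : V)

/-- The points strictly to the left of the line through the origin directed towards `y v`. -/
noncomputable def leftSide : Finset V := {w | 0 < ω (y v) (y w)}

/-- The points completing `y v` and a point `y u` to its left to a triangle around the origin. -/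
noncomputable def completions (u : V) : Finset V := {w | ω (y v) (y w) ≤ 0 ∧ 0 ≤ ω (y u) (y w)}

variable {y v} in
theorem notMem_leftSide_of_mem_completions {u w : V} (hw : w ∈ completions o y v u) :
    w ∉ leftSide o y v := by
  simp only [completions, leftSide, mem_filter, mem_univ, true_and, not_lt] at hw ⊢
  exact hw.1

variable {y} in
theorem lt_card_completions_add_card_filter_areaForm_pos {m : ℕ}
    (hy : IsDeepPoint ℝ y m 0) (u : V) :
    m < #(completions o y v u) + #{w ∈ leftSide o y v | 0 < ω (y u) (y w)} := by
  classical
  refine (hy.lt_card_lex_nonneg (ω (y u)) (ω (y v))).trans_le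
    ((card_le_card fun w hw => ?_).trans (card_union_le _ _))
  simp only [mem_filter, mem_univ, true_and] at hw
  simp only [leftSide, completions, mem_union, mem_filter, mem_univ, true_and]
  rcases hw with hpos | ⟨hzero, hle⟩
  · exact (le_or_gt (ω (y v) (y w)) 0).imp (fun h => ⟨h, hpos.le⟩) fun h => ⟨h, hpos⟩
  · exact Or.inl ⟨hle, hzero.ge⟩

variable [DecidableEq V]

/-- The points other than `v` on the closed ray from the origin away from `y v`; all points other
than `v` if `y v` is the origin. -/
noncomputable def oppositeRay : Finset V := {w | w ≠ v ∧ ω (y v) (y w) = 0 ∧ ⟪y v, y w⟫ ≤ 0}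

theorem disjoint_leftSide_oppositeRay : Disjoint (leftSide o y v) (oppositeRay o y v) := by
  refine disjoint_left.2 fun w hL hN => ?_
  simp only [leftSide, oppositeRay, mem_filter, mem_univ, true_and] at hL hN
  exact hL.ne' hN.2.1

variable {y} {m : ℕ}

theorem lt_card_leftSide_add_card_oppositeRay (hy : IsDeepPoint ℝ y m 0)
    (hm : m + 1 < Fintype.card V) : m < #(leftSide o y v) + #(oppositeRay o y v) := by
  by_cases hv : y v = 0
  · have hN : oppositeRay o y v = univ.erase v := by
      ext w
      simp [oppositeRay, hv]
    rw [hN, card_erase_of_mem (mem_univ v), card_univ]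
    omega
  · have hlex := hy.lt_card_lex_nonneg (ω (y v)) (innerₛₗ ℝ (y v))
    refine hlex.trans_le ((card_le_card fun w hw => ?_).trans (card_union_le _ _))
    simp only [mem_filter, mem_univ, true_and] at hw
    simp only [leftSide, oppositeRay, mem_union, mem_filter, mem_univ, true_and]
    refine hw.imp_right fun h => ⟨?_, h⟩
    rintro rfl
    exact h.2.not_gt (real_inner_self_pos.2 hv)

theorem choose_two_le_sum_card_completions_add_choose_two (hy : IsDeepPoint ℝ y m 0)
    (hm : m + 1 < Fintype.card V) :
    (m + 1).choose 2 ≤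
      ∑ u ∈ leftSide o y v, #(completions o y v u) + (#(oppositeRay o y v)).choose 2 := by
  -- The left side is sorted by the cotangent of the angle from `y v`.
  refine choose_two_le_sum_add_choose_two_of_le_add_card_filter_lt
    (fun w => ⟪y v, y w⟫ / ω (y v) (y w)) _ m _ _
    (lt_card_leftSide_add_card_oppositeRay o v hy hm) fun u hu => ?_
  have hcot : {w ∈ leftSide o y v | ⟪y v, y w⟫ / ω (y v) (y w) < ⟪y v, y u⟫ / ω (y v) (y u)} =
      {w ∈ leftSide o y v | 0 < ω (y u) (y w)} :=
    filter_congr fun w hw =>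
      (areaForm_pos_iff_inner_div_areaForm_lt o (mem_filter.1 hu).2 (mem_filter.1 hw).2).symm
  rw [hcot]
  exact (lt_card_completions_add_card_filter_areaForm_pos o v hy u).le

variable (y) in
theorem powersetCard_oppositeRay_subset_pairsAround :
    (oppositeRay o y v).powersetCard 2 ⊆ pairsAround ℝ y 0 v := by
  intro s hs
  obtain ⟨hsN, hcard⟩ := mem_powersetCard.1 hs
  have hN : ∀ w ∈ s, w ≠ v ∧ ω (y v) (y w) = 0 ∧ ⟪y v, y w⟫ ≤ 0 := fun w hw =>
    (mem_filter.1 (hsN hw)).2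
  refine mem_pairsAround.2 ⟨fun hv => (hN v hv).1 rfl, hcard, ?_⟩
  obtain ⟨w, hw⟩ := card_pos.1 (hcard ▸ two_pos)
  exact segment_subset_convexHull (Set.mem_image_of_mem y (by simp))
    (Set.mem_image_of_mem y (by simp [hw]))
    (zero_mem_segment_of_areaForm_eq_zero o (hN w hw).2.1 (hN w hw).2.2)

variable {v} in
theorem pair_mem_pairsAround {u w : V} (hu : u ∈ leftSide o y v) (hw : w ∈ completions o y v u) :
    {u, w} ∈ pairsAround ℝ y 0 v := by
  simp only [leftSide, completions, mem_filter, mem_univ, true_and] at hu hw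
  have huv : u ≠ v := by
    rintro rfl
    simp at hu
  have hwv : w ≠ v := by
    rintro rfl
    exact hu.not_ge (by simpa [o.areaForm_swap (y u)] using hw.2)
  have huw : u ≠ w := by
    rintro rfl
    exact hu.not_ge hw.1
  refine mem_pairsAround.2 ⟨by simp [huv.symm, hwv.symm], card_pair huw, ?_⟩
  exact zero_mem_convexHull_of_areaForm o (a := y v) (b := y u) (c := y w) ⟨v, by simp, rfl⟩
    ⟨u, by simp, rfl⟩ ⟨w, by simp, rfl⟩ hu hw.2 (by simpa [o.areaForm_swap (y w)] using hw.1)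

variable (y) in
theorem sum_card_completions_add_choose_two_le_card_pairsAround :
    ∑ u ∈ leftSide o y v, #(completions o y v u) + (#(oppositeRay o y v)).choose 2 ≤
      #(pairsAround ℝ y 0 v) := by
  set mixed := ((leftSide o y v).sigma (completions o y v)).image fun e => ({e.1, e.2} : Finset V)
  have hmixed : #mixed = ∑ u ∈ leftSide o y v, #(completions o y v u) := by
    rw [card_image_of_injOn, card_sigma]
    refine (injOn_pair_of_separated (· ∈ leftSide o y v)).mono fun e he => ?_
    obtain ⟨hu, hw⟩ := mem_sigma.1 he
    exact ⟨hu, notMem_leftSide_of_mem_completions o hw⟩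
  have hmixed_subset : mixed ⊆ pairsAround ℝ y 0 v := by
    refine image_subset_iff.2 fun e he => ?_
    obtain ⟨hu, hw⟩ := mem_sigma.1 he
    exact pair_mem_pairsAround o hu hw
  have hdisjoint : Disjoint mixed ((oppositeRay o y v).powersetCard 2) := by
    refine disjoint_left.2 fun s hs hsN => ?_
    obtain ⟨⟨u, w⟩, he, rfl⟩ := mem_image.1 hs
    exact disjoint_left.1 (disjoint_leftSide_oppositeRay o y v) (mem_sigma.1 he).1
      ((mem_powersetCard.1 hsN).1 (mem_insert_self u {w}))
  rw [← hmixed, ← card_powersetCard, ← card_union_of_disjoint hdisjoint]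
  exact card_le_card
    (union_subset hmixed_subset (powersetCard_oppositeRay_subset_pairsAround o y v))

theorem IsDeepPoint.choose_two_le_card_trianglesContaining {x : V → E} {r : E}
    (hr : IsDeepPoint ℝ x m r) (hm : m + 1 < Fintype.card V) :
    (m + 1).choose 2 ≤ #{t ∈ trianglesContaining ℝ x r | v ∈ t} := by
  have : FiniteDimensional ℝ E := .of_fact_finrank_eq_two
  have o : Orientation ℝ E (Fin 2) :=
    (finBasisOfFinrankEq ℝ E (Fact.out : finrank ℝ E = 2)).orientation
  rw [← trianglesContaining_sub]
  calc
    (m + 1).choose 2 ≤ _ := choose_two_le_sum_card_completions_add_choose_two o v hr.sub hm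
    _ ≤ #(pairsAround ℝ (fun w => x w - r) 0 v) :=
      sum_card_completions_add_choose_two_le_card_pairsAround o _ v
    _ ≤ _ := card_pairsAround_le_card_trianglesContaining ℝ _ 0 v

end Plane

theorem one_ninth_sub_le_choose_two_div_choose_two {n m : ℕ} (hn : 3 ≤ n) (hnm : n ≤ 3 * m + 3) :
    (1 / 9 - 2 / (9 * ((n - 1) * (n - 2))) : ℝ) ≤ (m + 1).choose 2 / (n - 1).choose 2 := by
  have hn' : (3 : ℝ) ≤ n := by exact_mod_cast hn
  have hnm' : (n : ℝ) ≤ 3 * m + 3 := by exact_mod_cast hnm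
  have hn1 : (0 : ℝ) < n - 1 := by linarith
  have hn2 : (0 : ℝ) < n - 2 := by linarith
  have hchoose : ((n - 1).choose 2 : ℝ) = (n - 1) * (n - 2) / 2 := by
    rw [Nat.cast_choose_two, Nat.cast_pred (by omega)]
    ring
  have hchoose' : ((m + 1).choose 2 : ℝ) = (m + 1) * m / 2 := by
    rw [Nat.cast_choose_two, Nat.cast_succ, add_sub_cancel_right]
  have hfactor : (1 / 9 - 2 / (9 * ((n - 1) * (n - 2))) : ℝ) * ((n - 1) * (n - 2) / 2) =
      n / 3 * ((n - 3) / 3) / 2 := by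
    field_simp
    ring
  rw [hchoose, hchoose', le_div_iff₀ (by positivity), hfactor]
  gcongr <;> linarith

theorem one_thirteenth_sub_le_one_ninth_sub {a : ℝ} (ha : 3 ≤ a) :
    1 / 13 - 3 / (13 * (a - 1)) ≤ 1 / 9 - 2 / (9 * ((a - 1) * (a - 2))) := by
  have ha1 : 0 < a - 1 := by linarith
  have ha2 : 0 < a - 2 := by linarith
  have hdiff : 1 / 9 - 2 / (9 * ((a - 1) * (a - 2))) - (1 / 13 - 3 / (13 * (a - 1))) =
      (4 * ((a - 1) * (a - 2)) + (27 * (a - 3) + 1)) / (117 * ((a - 1) * (a - 2))) := by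
    field_simp
    ring
  rw [← sub_nonneg, hdiff]
  have : 0 ≤ a - 3 := sub_nonneg.2 ha
  positivity

open Classical in
/-- The left-hand side is what Lean elaborates a sum over `t ∈ S.filter P` to when the type of `t`
is inferred to be `Set α`: the coercion is lifted through the `Finset` monad. -/
theorem sum_filter_bind_pure_coe {α β : Type*} [AddCommMonoid β] (S : Finset (Finset α))
    (P : Set α → Prop) (f : Set α → β) :
    ∑ t ∈ (S >>= fun s => pure (s : Set α)).filter P, f t =
      ∑ t ∈ S.filter fun s : Finset α => P ↑s, f ↑t := by
  have himage : (S >>= fun s => pure (s : Set α)) = S.image fun s : Finset α => (s : Set α) := by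
    ext t
    simp [bind_def, pure_def, eq_comm]
  rw [himage, filter_image, sum_image coe_injective.injOn]

theorem stmt_11_general {V E : Type*} [Fintype V] [NormedAddCommGroup E] [InnerProductSpace ℝ E]
    (hE : finrank ℝ E = 2) (hV : 3 ≤ Fintype.card V) (x : V → E) :
    ∃ r : E, ∀ p : V → ℝ, (∀ v, 0 ≤ p v) → ∑ v, p v = 1 →
      (1 / 9 - 2 / (9 * ((Fintype.card V - 1) * (Fintype.card V - 2))) : ℝ) ≤
        ∑ t ∈ trianglesContaining ℝ x r,
          (∑ v ∈ t, p v) / ((Fintype.card V - 1).choose 2 : ℝ) := by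
  classical
  have : Fact (finrank ℝ E = 2) := ⟨hE⟩
  have : FiniteDimensional ℝ E := .of_fact_finrank_eq_two
  obtain ⟨m, hm_lt, hm_le⟩ : ∃ m, 3 * m < Fintype.card V ∧ Fintype.card V ≤ 3 * m + 3 :=
    ⟨(Fintype.card V - 1) / 3, by omega, by omega⟩
  obtain ⟨r, hr⟩ := exists_isDeepPoint (𝕜 := ℝ) x (m := m) (by rwa [hE])
  refine ⟨r, fun p hp hp1 => ?_⟩
  have hweight : ((m + 1).choose 2 : ℝ) * ∑ v, p v ≤
      ∑ t ∈ trianglesContaining ℝ x r, ∑ v ∈ t, p v :=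
    mul_sum_le_sum_sum_of_le_card_filter_mem _ hp fun v =>
      Nat.cast_le.2 (hr.choose_two_le_card_trianglesContaining v (by omega))
  rw [hp1, mul_one] at hweight
  rw [← sum_div]
  exact (one_ninth_sub_le_choose_two_div_choose_two hV hm_le).trans
    (div_le_div_of_nonneg_right hweight (Nat.cast_nonneg _))

end

open Classical in
/-- Affine instance of the weighted overlap theorem: for any probability
distribution `p` on the vertices, some point of the plane is covered by a
collection of triangles of total weight at least `1/13 - 3/(13(n-1))`,
where the weight of a triangle `{u,v,w}` is `(p u + p v + p w)/(n-1).choose 2`. -/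
theorem stmt_11 {V : Type*} [Fintype V] [DecidableEq V]
    (n : ℕ) (hn : Fintype.card V = n) (hn3 : 3 ≤ n)
    (x : V → EuclideanSpace ℝ (Fin 2)) (hx : InGeneralPosition x)
    (p : V → ℝ) (hp0 : ∀ v, 0 ≤ p v) (hp1 : ∑ v, p v = 1) :
    ∃ r : EuclideanSpace ℝ (Fin 2),
      (1 / 13 - 3 / (13 * (n - 1)) : ℝ) ≤
        ∑ t ∈ ((Finset.univ : Finset V).powersetCard 3).filter
            (fun t => r ∈ convexHull ℝ (x '' ↑t)),
          (∑ v ∈ t, p v) / ((n - 1).choose 2 : ℝ) := by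
  subst hn
  obtain ⟨r, hr⟩ := stmt_11_general finrank_euclideanSpace_fin hn3 x
  refine ⟨r, (one_thirteenth_sub_le_one_ninth_sub (by exact_mod_cast hn3)).trans
    ((hr p hp0 hp1).trans_eq ?_)⟩
  simp only [sum_filter_bind_pure_coe, Finset.toFinset_coe, trianglesContaining]
end
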